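/- Parigot's storage theorem for λμ-calculus: if ⊢_AF2 T : ∀x{N^g[x] → ¬¬N[x]}, then T is a storage operator for classical integers in λμ-calculus, i.e. for every n ∈ ℕ there is a λ-term τₙ ≃β n̲ such that for every classical integer θₙ of value n (every closed λμ-term with ⊢_FD2 θₙ : N[sⁿ(0)]) there is a substitution σ with (T)θₙ f ∼_μ μα[α](f)σ(τₙ) (f a fresh variable). -/

import Mathlib

/- Pure untyped λ-calculus with de Bruijn indices. -/

inductive Lam : Type
  | var : ℕ → Lam
  | app : Lam → Lam → Lam
  | abs : Lam → Lam
  deriving DecidableEq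

namespace Lam

/-- Renaming of free variables. -/
def rename (ρ : ℕ → ℕ) : Lam → Lam
  | var i => var (ρ i)
  | app u v => app (u.rename ρ) (v.rename ρ)
  | abs u => abs (u.rename (fun i => match i with | 0 => 0 | j+1 => ρ j + 1))

/-- Lifting of a simultaneous substitution under a binder. -/
def liftSub (σ : ℕ → Lam) : ℕ → Lam
  | 0 => var 0
  | i+1 => (σ i).rename (· + 1)

/-- Simultaneous (capture-avoiding) substitution of the free variables. -/
def subst (σ : ℕ → Lam) : Lam → Lam
  | var i => σ i
  | app u v => app (u.subst σ) (v.subst σ)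
  | abs u => abs (u.subst (liftSub σ))

/-- `u.subst0 v` is `u[v/x]` for the first variable. -/
def subst0 (u v : Lam) : Lam :=
  u.subst (fun i => match i with | 0 => v | j+1 => var j)

/-- One step of β-reduction (anywhere in the term). -/
inductive Beta : Lam → Lam → Prop
  | beta (u v : Lam) : Beta (app (abs u) v) (u.subst0 v)
  | appL {u u'} (v) : Beta u u' → Beta (app u v) (app u' v)
  | appR (u) {v v'} : Beta v v' → Beta (app u v) (app u v')
  | abs {u u'} : Beta u u' → Beta (abs u) (abs u')

/-- β-equivalence `≃β`. -/
def BetaEq : Lam → Lam → Prop := Relation.EqvGen Beta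

/-- A term is normal if it has no β-redex. -/
def Normal (t : Lam) : Prop := ∀ u, ¬ Beta t u

def IsAbs : Lam → Prop
  | abs _ => True
  | _ => False

/-- One step of head reduction: reduction of the head redex. -/
inductive HeadStep : Lam → Lam → Prop
  | beta (u v) : HeadStep (app (abs u) v) (u.subst0 v)
  | appL {u u'} (v) : ¬ u.IsAbs → HeadStep u u' → HeadStep (app u v) (app u' v)
  | abs {u u'} : HeadStep u u' → HeadStep (abs u) (abs u')

/-- `HeadRedN n u v` : `u` head-reduces to `v` in exactly `n` steps (`u ≻ v` with `n(u,v) = n`). -/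
inductive HeadRedN : ℕ → Lam → Lam → Prop
  | refl (u) : HeadRedN 0 u u
  | step {n u v w} : HeadStep u v → HeadRedN n v w → HeadRedN (n+1) u w

/-- `u ≻ v` : `v` is obtained from `u` by some head reductions. -/
def HeadRed (u v : Lam) : Prop := ∃ n, HeadRedN n u v

/-- Head normal form. -/
def HeadNF (t : Lam) : Prop := ∀ u, ¬ HeadStep t u

def ClosedUnder : ℕ → Lam → Prop
  | k, var i => i < k
  | k, app u v => ClosedUnder k u ∧ ClosedUnder k v
  | k, abs u => ClosedUnder (k+1) u

/-- Closed λ-term. -/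
def Closed (t : Lam) : Prop := ClosedUnder 0 t

/-- `(f)ⁿx` : `iterApp f n x = (f)(f)…(f)x`. -/
def iterApp (f : Lam) : ℕ → Lam → Lam
  | 0, x => x
  | n+1, x => app f (iterApp f n x)

/-- The Church integer `n̲ = λxλf(f)ⁿx`. -/
def church (n : ℕ) : Lam := abs (abs (iterApp (var 0) n (var 1)))

/-- `(t)w₁…wₖ`. -/
def appList (t : Lam) (ws : List Lam) : Lam := ws.foldl app t

/-- `T` is a storage operator for the closed normal term `t` :
there is `τ ≃β t` such that for every `θ ≃β t` there is a substitution `σ`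
(not touching the fresh variable `f`, represented by the de Bruijn index `0`)
with `(T)θf ≻ (f)σ(τ)`. -/
def IsStorageFor (T t : Lam) : Prop :=
  Closed T ∧ ∃ τ, BetaEq τ t ∧ ∀ θ, BetaEq θ t →
    ∃ σ : ℕ → Lam, σ 0 = var 0 ∧
      HeadRed (app (app T θ) (var 0)) (app (var 0) (τ.subst σ))

end Lam

/- Second order predicate logic : the types of the AF2 type system. -/

/-- A first order language: function symbols with arities, and predicate symbols. -/
structure Sig where
  Fn : Type
  arFn : Fn → ℕ
  Pr : Type

/-- First order terms over `S` (de Bruijn indices for first order variables). -/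
inductive FOTerm (S : Sig) : Type
  | var : ℕ → FOTerm S
  | fn : (f : S.Fn) → (Fin (S.arFn f) → FOTerm S) → FOTerm S

namespace FOTerm

variable {S : Sig}

def rename (ρ : ℕ → ℕ) : FOTerm S → FOTerm S
  | var i => var (ρ i)
  | fn f ts => fn f (fun i => (ts i).rename ρ)

def liftSub (σ : ℕ → FOTerm S) : ℕ → FOTerm S
  | 0 => var 0
  | i+1 => (σ i).rename (· + 1)

/-- Simultaneous substitution on first order terms. -/
def subst (σ : ℕ → FOTerm S) : FOTerm S → FOTerm S
  | var i => σ i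
  | fn f ts => fn f (fun i => (ts i).subst σ)

end FOTerm


/-- Formulas of second order predicate logic over `S` : `⊥`, atomic formulas
`P(t₁,…,tₙ)` (predicate symbol) and `X(t₁,…,tₙ)` (predicate variable, de Bruijn),
implication, first order and second order universal quantification. -/
inductive Form (S : Sig) : Type
  | bot : Form S
  | pr : S.Pr → List (FOTerm S) → Form S
  | pvar : ℕ → List (FOTerm S) → Form S
  | arr : Form S → Form S → Form S
  | fall : Form S → Form S
  | pall : Form S → Form S

namespace Form

variable {S : Sig}

/-- `¬A = A → ⊥`. -/
def neg (A : Form S) : Form S := arr A bot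

/-- Substitution of first order terms for the first order variables of a formula. -/
def substFO (σ : ℕ → FOTerm S) : Form S → Form S
  | bot => bot
  | pr P ts => pr P (ts.map (FOTerm.subst σ))
  | pvar X ts => pvar X (ts.map (FOTerm.subst σ))
  | arr A B => arr (A.substFO σ) (B.substFO σ)
  | fall A => fall (A.substFO (FOTerm.liftSub σ))
  | pall A => pall (A.substFO σ)

/-- `A[u/x]` for the first first-order variable. -/
def substFO0 (A : Form S) (u : FOTerm S) : Form S :=
  A.substFO (fun i => match i with | 0 => u | j+1 => FOTerm.var j)

/-- Lifting of the free first order variables (used for the rule (4)). -/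
def shiftFO (A : Form S) : Form S := A.substFO (fun i => FOTerm.var (i+1))

/-- Renaming of the free predicate variables. -/
def rename2 (ρ : ℕ → ℕ) : Form S → Form S
  | bot => bot
  | pr P ts => pr P ts
  | pvar X ts => pvar (ρ X) ts
  | arr A B => arr (A.rename2 ρ) (B.rename2 ρ)
  | fall A => fall (A.rename2 ρ)
  | pall A => pall (A.rename2 (fun i => match i with | 0 => 0 | j+1 => ρ j + 1))

/-- `inst2 G d e A` : substitution `A[G/X]` of the formula `G` (whose first order
variables `0,…,k-1` are the parameters of the predicate variable `X`) for the
predicate variable `X` of de Bruijn index `e`, where `d` first order binders have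
been crossed. Each atomic subformula `X(t₁,…,tₖ)` is replaced by `G[t₁/x₁,…,tₖ/xₖ]`. -/
def inst2 (G : Form S) : ℕ → ℕ → Form S → Form S
  | _, _, bot => bot
  | _, _, pr P ts => pr P ts
  | d, e, pvar X ts =>
      if X = e then
        (G.rename2 (· + e)).substFO (fun i =>
          if h : i < ts.length then ts.get ⟨i, h⟩ else FOTerm.var (i - ts.length + d))
      else pvar (if e < X then X - 1 else X) ts
  | d, e, arr A B => arr (inst2 G d e A) (inst2 G d e B)
  | d, e, fall A => fall (inst2 G (d+1) e A)
  | d, e, pall A => pall (inst2 G d (e+1) A)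

/-- `A[G/X]` for the first predicate variable. -/
def inst2_0 (A G : Form S) : Form S := inst2 G 0 0 A

end Form

/-- Axioms of the equational theory: substitution instances of the equations of `E`. -/
def EqAx {S : Sig} (E : Set (FOTerm S × FOTerm S)) (u v : FOTerm S) : Prop :=
  ∃ p ∈ E, ∃ σ : ℕ → FOTerm S, u = p.1.subst σ ∧ v = p.2.subst σ

/-- `u ≈ v` : the equivalence relation generated by the substitution instances
of the equations of `E`. -/
def EqE {S : Sig} (E : Set (FOTerm S × FOTerm S)) : FOTerm S → FOTerm S → Prop :=
  Relation.EqvGen (EqAx E)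

/-- The AF2 type system: `AF2 S E Γ t A` means `Γ ⊢_{AF2} t : A`
with respect to the set of equations `E` (de Bruijn presentation: the rules
(4) and (6) of ∀-introduction lift the context, which implements the side
condition that the quantified variable does not occur free in `Γ`). -/
inductive AF2 (S : Sig) (E : Set (FOTerm S × FOTerm S)) :
    List (Form S) → Lam → Form S → Prop
  | var {Γ : List (Form S)} {i : ℕ} {A : Form S} :
      Γ[i]? = some A → AF2 S E Γ (.var i) A
  | absI {Γ : List (Form S)} {A B : Form S} {t : Lam} :
      AF2 S E (A :: Γ) t B → AF2 S E Γ (.abs t) (.arr A B)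
  | appE {Γ : List (Form S)} {A B : Form S} {u v : Lam} :
      AF2 S E Γ u (.arr A B) → AF2 S E Γ v A → AF2 S E Γ (.app u v) B
  | fallI {Γ : List (Form S)} {t : Lam} {A : Form S} :
      AF2 S E (Γ.map Form.shiftFO) t A → AF2 S E Γ t (.fall A)
  | fallE {Γ : List (Form S)} {t : Lam} {A : Form S} (u : FOTerm S) :
      AF2 S E Γ t (.fall A) → AF2 S E Γ t (A.substFO0 u)
  | pallI {Γ : List (Form S)} {t : Lam} {A : Form S} :
      AF2 S E (Γ.map (Form.rename2 (· + 1))) t A → AF2 S E Γ t (.pall A)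
  | pallE {Γ : List (Form S)} {t : Lam} {A : Form S} (G : Form S) :
      AF2 S E Γ t (.pall A) → AF2 S E Γ t (A.inst2_0 G)
  | eqE {Γ : List (Form S)} {t : Lam} {A : Form S} {u v : FOTerm S} :
      AF2 S E Γ t (A.substFO0 u) → EqE E u v → AF2 S E Γ t (A.substFO0 v)

/- The language of arithmetic: a constant 0 and a unary function symbol s. -/

inductive NatFn : Type
  | zero : NatFn
  | succ : NatFn

/-- The signature with a constant symbol `0` and a unary function symbol `s`. -/
def NatSig : Sig where
  Fn := NatFn
  arFn := fun f => match f with | .zero => 0 | .succ => 1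
  Pr := Empty

/-- The first order term `0`. -/
def zeroT : FOTerm NatSig := .fn NatFn.zero (fun i => i.elim0)

/-- The first order term `s(u)`. -/
def succT (u : FOTerm NatSig) : FOTerm NatSig := .fn NatFn.succ (fun _ => u)

/-- The first order term `sⁿ(0)`. -/
def numT : ℕ → FOTerm NatSig
  | 0 => zeroT
  | n+1 => succT (numT n)

/-- A set of equations is adequate with the type of integers iff
`s(a) ≉ 0` and `s(a) ≈ s(b)` implies `a ≈ b`. -/
def Adequate (E : Set (FOTerm NatSig × FOTerm NatSig)) : Prop :=
  (∀ a, ¬ EqE E (succT a) zeroT) ∧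
  (∀ a b, EqE E (succT a) (succT b) → EqE E a b)

/-- The type of integers `N[u] = ∀X{X(0), ∀y(X(y) → X(sy)) → X(u)}`. -/
def NForm (u : FOTerm NatSig) : Form NatSig :=
  .pall (.arr (.pvar 0 [zeroT])
    (.arr (.fall (.arr (.pvar 0 [FOTerm.var 0]) (.pvar 0 [succT (FOTerm.var 0)])))
      (.pvar 0 [u])))

/-- The Gödel translation `F^g`, obtained by putting `¬` in front of
each atomic subformula of `F`. -/
def Form.godel {S : Sig} : Form S → Form S
  | .bot => .neg .bot
  | .pr P ts => .neg (.pr P ts)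
  | .pvar X ts => .neg (.pvar X ts)
  | .arr A B => .arr A.godel B.godel
  | .fall A => .fall A.godel
  | .pall A => .pall A.godel

/-- The type `∀x{N^g[x] → ¬¬N[x]}` of storage operators. -/
def storType : Form NatSig :=
  .fall (.arr (NForm (FOTerm.var 0)).godel (.neg (.neg (NForm (FOTerm.var 0)))))

/- The λμ-calculus (de Bruijn indices for both λ-variables and μ-variables).
A term `μα[β]t` is represented as `mu b t` where the binder binds `α`
(μ-index 0 inside `t`) and `b` is the μ-index of the name `β` (in the
μ-context of `t`, which includes `α`). -/

inductive LM : Type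
  | var : ℕ → LM
  | abs : LM → LM
  | app : LM → LM → LM
  | mu : ℕ → LM → LM

namespace LM

def liftρ (ρ : ℕ → ℕ) : ℕ → ℕ
  | 0 => 0
  | j+1 => ρ j + 1

/-- Renaming of the free λ-variables. -/
def renL (ρ : ℕ → ℕ) : LM → LM
  | var i => var (ρ i)
  | abs t => abs (t.renL (liftρ ρ))
  | app t u => app (t.renL ρ) (u.renL ρ)
  | mu b t => mu b (t.renL ρ)

/-- Renaming of the free μ-variables. -/
def renM (ρ : ℕ → ℕ) : LM → LM
  | var i => var i
  | abs t => abs (t.renM ρ)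
  | app t u => app (t.renM ρ) (u.renM ρ)
  | mu b t => mu (liftρ ρ b) (t.renM (liftρ ρ))

/-- Simultaneous substitution of λ-variables. -/
def substL (σ : ℕ → LM) : LM → LM
  | var i => σ i
  | abs t => abs (t.substL (fun i => match i with | 0 => var 0 | j+1 => (σ j).renL (· + 1)))
  | app t u => app (t.substL σ) (u.substL σ)
  | mu b t => mu b (t.substL (fun i => (σ i).renM (· + 1)))

/-- `u[v/x]` for the first λ-variable. -/
def subst0 (u v : LM) : LM :=
  u.substL (fun i => match i with | 0 => v | j+1 => var j)

/-- `t[v/*α]` : replace inductively each subterm of the form `[α]w` by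
`[α](w)v`, where `α` is the μ-variable of index `k` in the context of `t`. -/
def star (v : LM) : ℕ → LM → LM
  | _, var i => var i
  | k, abs t => abs (star (v.renL (· + 1)) k t)
  | k, app t u => app (star v k t) (star v k u)
  | k, mu b t =>
      mu b (if b = k+1 then app (star (v.renM (· + 1)) (k+1) t) (v.renM (· + 1))
            else star (v.renM (· + 1)) (k+1) t)

/-- The contractum of `(μα u)v → μα u[v/*α]` where `u = [b]t`. -/
def muApp (b : ℕ) (t v : LM) : LM :=
  mu b (if b = 0 then app (star (v.renM (· + 1)) 0 t) (v.renM (· + 1))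
        else star (v.renM (· + 1)) 0 t)

/-- The contractum of `(S₁)` : `μα[β]μα'[c]s → μα ([c]s)[β/α']`. -/
def muRen (b c : ℕ) (s : LM) : LM :=
  mu (match c with | 0 => b | j+1 => j)
    (s.renM (fun i => match i with | 0 => b | j+1 => j))

/-- The contractum of `(S₃)` : `μα u → λx μα u[x/*α]` where `u = [b]t`. -/
def muEta (b : ℕ) (t : LM) : LM :=
  abs (mu b (if b = 0 then app (star (var 0) 0 (t.renL (· + 1))) (var 0)
             else star (var 0) 0 (t.renL (· + 1))))

/-- The μ-variable of index `k` occurs free (as a name) in the term. -/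
def freeM : ℕ → LM → Prop
  | _, var _ => False
  | k, abs t => freeM k t
  | k, app t u => freeM k t ∨ freeM k u
  | k, mu b t => b = k + 1 ∨ freeM (k+1) t

/-- The λ-variable of index `k` occurs free in the term. -/
def freeL : ℕ → LM → Prop
  | k, var i => i = k
  | k, abs t => freeL (k+1) t
  | k, app t u => freeL k t ∨ freeL k u
  | k, mu _ t => freeL k t

/-- The term contains a subterm of the form `[α]λy w`, where `α` is the
μ-variable of index `k` in the context of the term. -/
def containsNL : ℕ → LM → Prop
  | _, var _ => False
  | k, abs t => containsNL k t
  | k, app t u => containsNL k t ∨ containsNL k u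
  | k, mu b t => (b = k + 1 ∧ ∃ w, t = abs w) ∨ containsNL (k+1) t

/-- One step of λμ-reduction : the computation rules `(C₁)`, `(C₂)` and the
simplification rules `(S₁)`, `(S₂)`, `(S₃)`, anywhere in the term. -/
inductive Step : LM → LM → Prop
  | c1 (u v : LM) : Step (app (abs u) v) (u.subst0 v)
  | c2 (b : ℕ) (t v : LM) : Step (app (mu b t) v) (muApp b t v)
  | s1 (b c : ℕ) (s : LM) : Step (mu b (mu c s)) (muRen b c s)
  | s2 (u : LM) : ¬ freeM 0 u → Step (mu 0 u) (u.renM (· - 1))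
  | s3 (b : ℕ) (t : LM) :
      ((b = 0 ∧ ∃ w, t = abs w) ∨ containsNL 0 t) → Step (mu b t) (muEta b t)
  | appL {t t'} (v) : Step t t' → Step (app t v) (app t' v)
  | appR (t) {v v'} : Step v v' → Step (app t v) (app t v')
  | abs {t t'} : Step t t' → Step (abs t) (abs t')
  | mu (b) {t t'} : Step t t' → Step (mu b t) (mu b t')

/-- Many-step λμ-reduction. -/
def Red : LM → LM → Prop := Relation.ReflTransGen Step

def IsAbsOrMu : LM → Prop
  | abs _ => True
  | mu _ _ => True
  | _ => False

/-- One step of head reduction in the λμ-calculus. -/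
inductive HStep : LM → LM → Prop
  | c1 (u v : LM) : HStep (app (abs u) v) (u.subst0 v)
  | c2 (b : ℕ) (t v : LM) : HStep (app (mu b t) v) (muApp b t v)
  | s1 (b c : ℕ) (s : LM) : HStep (mu b (mu c s)) (muRen b c s)
  | s2 (u : LM) : ¬ freeM 0 u → HStep (mu 0 u) (u.renM (· - 1))
  | s3 (b : ℕ) (t : LM) :
      ((b = 0 ∧ ∃ w, t = abs w) ∨ containsNL 0 t) → HStep (mu b t) (muEta b t)
  | appL {t t'} (v) : ¬ t.IsAbsOrMu → HStep t t' → HStep (app t v) (app t' v)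
  | abs {t t'} : HStep t t' → HStep (abs t) (abs t')
  | mu (b) {t t'} : HStep t t' → HStep (mu b t) (mu b t')

/-- Head λμ-reduction. -/
def HRed : LM → LM → Prop := Relation.ReflTransGen HStep

/-- `u ∼μ v` : `u` and `v` have a common reduct by head reduction. -/
def SimMu (u v : LM) : Prop := ∃ w, HRed u w ∧ HRed v w

/-- One step of β-reduction (rule `(C₁)` anywhere in the term). -/
inductive Beta : LM → LM → Prop
  | c1 (u v : LM) : Beta (app (abs u) v) (u.subst0 v)
  | appL {t t'} (v) : Beta t t' → Beta (app t v) (app t' v)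
  | appR (t) {v v'} : Beta v v' → Beta (app t v) (app t v')
  | abs {t t'} : Beta t t' → Beta (abs t) (abs t')
  | mu (b) {t t'} : Beta t t' → Beta (mu b t) (mu b t')

/-- β-equivalence. -/
def BetaEq : LM → LM → Prop := Relation.EqvGen Beta

/-- Normal λμ-terms. -/
def NormalLM (t : LM) : Prop := ∀ u, ¬ Step t u

/-- Closed λμ-terms : no free λ-variable and no free μ-variable. -/
def ClosedLM (t : LM) : Prop := (∀ k, ¬ freeL k t) ∧ (∀ k, ¬ freeM k t)

/-- The term contains no μ-construction (it is a λ-term). -/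
def MuFree : LM → Prop
  | var _ => True
  | abs t => MuFree t
  | app t u => MuFree t ∧ MuFree u
  | mu _ _ => False

def iterApp (f : LM) : ℕ → LM → LM
  | 0, x => x
  | n+1, x => app f (iterApp f n x)

/-- The Church integer `n̲ = λxλf(f)ⁿx` as a λμ-term. -/
def church (n : ℕ) : LM := abs (abs (iterApp (var 0) n (var 1)))

end LM

/-- Parigot's second order classical type system FD2 for the λμ-calculus :
`FD2 S E Γ t A Δ` means `Γ ⊢_{FD2} t : A, Δ`, where `Γ` is the context of
the λ-variables and `Δ` the context of the μ-variables. Its rules are those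
of AF2 together with the naming rule (9). -/
inductive FD2 (S : Sig) (E : Set (FOTerm S × FOTerm S)) :
    List (Form S) → LM → Form S → List (Form S) → Prop
  | var {Γ : List (Form S)} {i : ℕ} {A : Form S} {Δ : List (Form S)} :
      Γ[i]? = some A → FD2 S E Γ (.var i) A Δ
  | absI {Γ : List (Form S)} {A B : Form S} {t : LM} {Δ : List (Form S)} :
      FD2 S E (A :: Γ) t B Δ → FD2 S E Γ (.abs t) (.arr A B) Δ
  | appE {Γ : List (Form S)} {A B : Form S} {u v : LM} {Δ : List (Form S)} :
      FD2 S E Γ u (.arr A B) Δ → FD2 S E Γ v A Δ → FD2 S E Γ (.app u v) B Δ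
  | fallI {Γ : List (Form S)} {t : LM} {A : Form S} {Δ : List (Form S)} :
      FD2 S E (Γ.map Form.shiftFO) t A (Δ.map Form.shiftFO) →
      FD2 S E Γ t (.fall A) Δ
  | fallE {Γ : List (Form S)} {t : LM} {A : Form S} {Δ : List (Form S)} (u : FOTerm S) :
      FD2 S E Γ t (.fall A) Δ → FD2 S E Γ t (A.substFO0 u) Δ
  | pallI {Γ : List (Form S)} {t : LM} {A : Form S} {Δ : List (Form S)} :
      FD2 S E (Γ.map (Form.rename2 (· + 1))) t A (Δ.map (Form.rename2 (· + 1))) →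
      FD2 S E Γ t (.pall A) Δ
  | pallE {Γ : List (Form S)} {t : LM} {A : Form S} {Δ : List (Form S)} (G : Form S) :
      FD2 S E Γ t (.pall A) Δ → FD2 S E Γ t (A.inst2_0 G) Δ
  | eqE {Γ : List (Form S)} {t : LM} {A : Form S} {u v : FOTerm S} {Δ : List (Form S)} :
      FD2 S E Γ t (A.substFO0 u) Δ → EqE E u v → FD2 S E Γ t (A.substFO0 v) Δ
  | muR {Γ : List (Form S)} {t : LM} {A B : Form S} {Δ : List (Form S)} {a : ℕ} :
      FD2 S E Γ t A (B :: Δ) → (B :: Δ)[a]? = some A →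
      FD2 S E Γ (.mu a t) B Δ

/-- The AF2 type system over (μ-free) λμ-terms. -/
inductive AF2LM (S : Sig) (E : Set (FOTerm S × FOTerm S)) :
    List (Form S) → LM → Form S → Prop
  | var {Γ : List (Form S)} {i : ℕ} {A : Form S} :
      Γ[i]? = some A → AF2LM S E Γ (.var i) A
  | absI {Γ : List (Form S)} {A B : Form S} {t : LM} :
      AF2LM S E (A :: Γ) t B → AF2LM S E Γ (.abs t) (.arr A B)
  | appE {Γ : List (Form S)} {A B : Form S} {u v : LM} :
      AF2LM S E Γ u (.arr A B) → AF2LM S E Γ v A → AF2LM S E Γ (.app u v) B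
  | fallI {Γ : List (Form S)} {t : LM} {A : Form S} :
      AF2LM S E (Γ.map Form.shiftFO) t A → AF2LM S E Γ t (.fall A)
  | fallE {Γ : List (Form S)} {t : LM} {A : Form S} (u : FOTerm S) :
      AF2LM S E Γ t (.fall A) → AF2LM S E Γ t (A.substFO0 u)
  | pallI {Γ : List (Form S)} {t : LM} {A : Form S} :
      AF2LM S E (Γ.map (Form.rename2 (· + 1))) t A → AF2LM S E Γ t (.pall A)
  | pallE {Γ : List (Form S)} {t : LM} {A : Form S} (G : Form S) :
      AF2LM S E Γ t (.pall A) → AF2LM S E Γ t (A.inst2_0 G)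
  | eqE {Γ : List (Form S)} {t : LM} {A : Form S} {u v : FOTerm S} :
      AF2LM S E Γ t (A.substFO0 u) → EqE E u v → AF2LM S E Γ t (A.substFO0 v)


/-!
Apply `T` to two variables, `x₁` in place of the integer and `x₀ = f`, and interpret the types of
`AF2` by saturated sets of λ-terms, with `⊥` interpreted by the terms that, under every substitution
realizing their variables, reduce to `(f)σ(τ)` for one fixed `τ` that reduces to `n̲`. If `x₁`
realizes `N^g[n]` and `x₀` realizes `¬N[n]`, then `(T)x₁x₀` realizes `⊥`, which yields a `τ` that
does not depend on the classical integer. That `x₀` realizes `¬N[n]` amounts to the fact that a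
λ-term of type `N[n]` reduces to `n̲`. For `x₁`, an argument of type `N^g[n]` iterates some `b` on
some `a`; each iterate is represented by a fresh variable, and a table fixed in advance records
which iterate a variable stands for.

A classical integer may be substituted for `x₁` by a second realizability argument, this time for
`FD2`: types are interpreted by sets of stacks, and the pole consists of the terms that evaluate
to `(f)σ(τ)` on a stack machine. Finally, head reduction under a `μα` simulates this machine by
combining `(C₂)` with `(S₁)`, so that `(T)θf` evaluates to `μα[α](f)σ(τ)` up to `∼μ`.
-/

/-- The environment `a, σ 0, σ 1, …`, with `a` in front of `σ`. -/
def scons {α : Type*} (a : α) (σ : ℕ → α) : ℕ → α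
  | 0 => a
  | j + 1 => σ j

theorem comp_scons {α β : Type*} (f : α → β) (a : α) (σ : ℕ → α) :
    f ∘ scons a σ = scons (f a) (f ∘ σ) := by
  funext j; cases j <;> rfl

namespace LM

section Substitution

/-- Simultaneous renaming of the λ-variables (by `ρ`) and of the μ-variables (by `δ`). -/
@[simp]
def rename (ρ δ : ℕ → ℕ) : LM → LM
  | var i => var (ρ i)
  | abs t => abs (t.rename (liftρ ρ) δ)
  | app t u => app (t.rename ρ δ) (u.rename ρ δ)
  | mu b t => mu (liftρ δ b) (t.rename ρ (liftρ δ))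

/-- The application `(t)v₁…vₖ` of a term to a stack of arguments. -/
def appStack (t : LM) (π : List LM) : LM := π.foldl app t

/-- What a simultaneous substitution does to μ-variables: if `κ j = (k, π)`, then each named
subterm `[j]w` becomes `[k](w)π`. This covers both renaming and the substitution `[v/*α]`. -/
abbrev StackSubst := ℕ → ℕ × List LM

namespace StackSubst

/-- The renaming `δ` of the μ-variables, seen as a stack substitution. -/
def ofRename (δ : ℕ → ℕ) : StackSubst := fun j => (δ j, [])

/-- Renaming of the free variables in the range of a stack substitution. -/
def rename (ρ δ : ℕ → ℕ) (κ : StackSubst) : StackSubst :=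
  fun j => (δ (κ j).1, (κ j).2.map (LM.rename ρ δ))

/-- Lifting of a stack substitution under a μ-binder. -/
def lift (κ : StackSubst) : StackSubst := scons (0, []) (κ.rename id (· + 1))

/-- `[α](w)π` for the innermost μ-variable `α`, which stays bound. -/
def single (π : List LM) : StackSubst :=
  scons (0, π.map (LM.rename id (· + 1))) (ofRename (· + 1))

/-- The innermost μ-variable is instantiated by the name `0` with stack `π`. -/
def push (π : List LM) : StackSubst := scons (0, π) (ofRename id)

end StackSubst

/-- Lifting of a λ-substitution under a λ-binder. -/
def liftSub (σ : ℕ → LM) : ℕ → LM := scons (var 0) (rename (· + 1) id ∘ σ)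

/-- Simultaneous substitution for the λ-variables and the μ-variables. -/
@[simp]
def inst (σ : ℕ → LM) (κ : StackSubst) : LM → LM
  | var i => σ i
  | abs t => abs (t.inst (liftSub σ) (κ.rename (· + 1) id))
  | app t u => app (t.inst σ κ) (u.inst σ κ)
  | mu b t => mu (κ.lift b).1 (appStack (t.inst (rename id (· + 1) ∘ σ) κ.lift) (κ.lift b).2)

/-- Composition of substitutions: the μ-part of `κ` followed by the substitution `(σ, ν)`. -/
def StackSubst.comp (σ : ℕ → LM) (ν κ : StackSubst) : StackSubst :=
  fun j => ((ν (κ j).1).1, (κ j).2.map (inst σ ν) ++ (ν (κ j).1).2)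

@[simp] theorem appStack_nil (t : LM) : t.appStack [] = t := rfl

@[simp] theorem appStack_cons (t v : LM) (π : List LM) :
    t.appStack (v :: π) = (app t v).appStack π := rfl

theorem appStack_append (t : LM) (π π' : List LM) :
    t.appStack (π ++ π') = (t.appStack π).appStack π' :=
  List.foldl_append

theorem liftρ_eq_scons (ρ : ℕ → ℕ) : liftρ ρ = scons 0 (Nat.succ ∘ ρ) := by
  funext j; cases j <;> rfl

@[simp] theorem liftρ_id : liftρ id = id := by
  funext j; cases j <;> rfl

@[simp] theorem liftρ_liftρ (ρ' ρ : ℕ → ℕ) (j : ℕ) : liftρ ρ' (liftρ ρ j) = liftρ (ρ' ∘ ρ) j := by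
  cases j <;> rfl

@[simp] theorem liftρ_comp (ρ' ρ : ℕ → ℕ) : liftρ ρ' ∘ liftρ ρ = liftρ (ρ' ∘ ρ) :=
  funext (liftρ_liftρ ρ' ρ)

@[simp] theorem scons_comp_liftρ {α : Type*} (a : α) (σ : ℕ → α) (ρ : ℕ → ℕ) :
    scons a σ ∘ liftρ ρ = scons a (σ ∘ ρ) := by
  funext j; cases j <;> rfl

@[simp] theorem rename_id (t : LM) : t.rename id id = t := by
  induction t <;> simp [*]

@[simp] theorem rename_rename (t : LM) (ρ δ ρ' δ' : ℕ → ℕ) :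
    (t.rename ρ δ).rename ρ' δ' = t.rename (ρ' ∘ ρ) (δ' ∘ δ) := by
  induction t generalizing ρ δ ρ' δ' <;> simp [*]

theorem rename_comp_rename (ρ δ ρ' δ' : ℕ → ℕ) :
    rename ρ' δ' ∘ rename ρ δ = rename (ρ' ∘ ρ) (δ' ∘ δ) :=
  funext fun t => rename_rename t ρ δ ρ' δ'

@[simp] theorem rename_appStack (ρ δ : ℕ → ℕ) (t : LM) (π : List LM) :
    (t.appStack π).rename ρ δ = (t.rename ρ δ).appStack (π.map (rename ρ δ)) := by
  induction π generalizing t <;> simp [*]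

@[simp] theorem inst_appStack (σ : ℕ → LM) (κ : StackSubst) (t : LM) (π : List LM) :
    (t.appStack π).inst σ κ = (t.inst σ κ).appStack (π.map (inst σ κ)) := by
  induction π generalizing t <;> simp [*]

@[simp] theorem StackSubst.rename_rename (ρ δ ρ' δ' : ℕ → ℕ) (κ : StackSubst) :
    (κ.rename ρ δ).rename ρ' δ' = κ.rename (ρ' ∘ ρ) (δ' ∘ δ) := by
  funext j; simp [rename, rename_comp_rename]

@[simp] theorem StackSubst.lift_ofRename (δ : ℕ → ℕ) : (ofRename δ).lift = ofRename (liftρ δ) := by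
  funext j; cases j <;> rfl

theorem StackSubst.rename_lift (ρ δ : ℕ → ℕ) (κ : StackSubst) :
    κ.lift.rename ρ (liftρ δ) = (κ.rename ρ δ).lift := by
  have h : (κ.rename id (· + 1)).rename ρ (liftρ δ) = (κ.rename ρ δ).rename id (· + 1) := by
    simp only [rename_rename]; rfl
  funext j
  cases j with
  | zero => rfl
  | succ j => exact congrFun h j

theorem rename_liftSub (ρ δ : ℕ → ℕ) (σ : ℕ → LM) :
    rename (liftρ ρ) δ ∘ liftSub σ = liftSub (rename ρ δ ∘ σ) := by
  rw [liftSub, liftSub, comp_scons, ← Function.comp_assoc, ← Function.comp_assoc,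
    rename_comp_rename, rename_comp_rename]
  rfl

theorem liftSub_var (ρ : ℕ → ℕ) : liftSub (var ∘ ρ) = var ∘ liftρ ρ := by
  rw [liftρ_eq_scons, comp_scons]; rfl

theorem inst_var_ofRename (t : LM) (ρ δ : ℕ → ℕ) :
    t.inst (var ∘ ρ) (.ofRename δ) = t.rename ρ δ := by
  induction t generalizing ρ δ with
  | var i => rfl
  | abs t ih => rw [inst, rename, liftSub_var, ← ih]; rfl
  | app t u iht ihu => rw [inst, rename, iht, ihu]
  | mu b t ih => rw [inst, rename, StackSubst.lift_ofRename, ← ih]; rfl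

@[simp] theorem inst_id (t : LM) : t.inst var (.ofRename id) = t :=
  (inst_var_ofRename t id id).trans (rename_id t)

theorem inst_rename (t : LM) (ρ δ : ℕ → ℕ) (σ : ℕ → LM) (κ : StackSubst) :
    (t.rename ρ δ).inst σ κ = t.inst (σ ∘ ρ) (κ ∘ δ) := by
  induction t generalizing ρ δ σ κ with
  | var i => rfl
  | abs t ih => simp only [rename, inst, ih, liftSub, scons_comp_liftρ]; rfl
  | app t u iht ihu => simp only [rename, inst, iht, ihu]
  | mu b t ih =>
    have hκ : κ.lift ∘ liftρ δ = StackSubst.lift (κ ∘ δ) := scons_comp_liftρ _ _ _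
    rw [rename, inst, inst, ih, hκ, ← hκ]; rfl

theorem rename_inst (t : LM) (σ : ℕ → LM) (κ : StackSubst) (ρ δ : ℕ → ℕ) :
    (t.inst σ κ).rename ρ δ = t.inst (rename ρ δ ∘ σ) (κ.rename ρ δ) := by
  induction t generalizing σ κ ρ δ with
  | var i => rfl
  | abs t ih => simp only [rename, inst, ih, rename_liftSub, StackSubst.rename_rename]; rfl
  | app t u iht ihu => simp only [rename, inst, iht, ihu]
  | mu b t ih =>
    have hσ : rename ρ (liftρ δ) ∘ rename id (· + 1) ∘ σ
        = rename id (· + 1) ∘ rename ρ δ ∘ σ := by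
      funext j; simp only [Function.comp_apply, rename_rename]; rfl
    rw [inst, rename, rename_appStack, ih, hσ, StackSubst.rename_lift, inst,
      ← StackSubst.rename_lift]
    rfl

theorem inst_rename_succ (σ : ℕ → LM) (κ : StackSubst) :
    inst (liftSub σ) (κ.rename (· + 1) id) ∘ rename (· + 1) id = rename (· + 1) id ∘ inst σ κ := by
  funext s; simp only [Function.comp_apply, inst_rename, rename_inst]; rfl

theorem inst_lift_rename_succ (σ : ℕ → LM) (κ : StackSubst) :
    inst (rename id (· + 1) ∘ σ) κ.lift ∘ rename id (· + 1) = rename id (· + 1) ∘ inst σ κ := by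
  funext s; simp only [Function.comp_apply, inst_rename, rename_inst]; rfl

theorem StackSubst.comp_rename_succ (σ : ℕ → LM) (κ' κ : StackSubst) :
    comp (liftSub σ) (κ'.rename (· + 1) id) (κ.rename (· + 1) id)
      = (comp σ κ' κ).rename (· + 1) id := by
  funext j; simp [comp, rename, inst_rename_succ]

theorem StackSubst.comp_lift (σ : ℕ → LM) (κ' κ : StackSubst) :
    comp (LM.rename id (· + 1) ∘ σ) κ'.lift κ.lift = (comp σ κ' κ).lift := by
  funext j
  cases j with
  | zero => rfl
  | succ j => simp [comp, lift, rename, scons, ← inst_lift_rename_succ]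

theorem inst_inst (t : LM) (σ : ℕ → LM) (κ : StackSubst) (σ' : ℕ → LM) (κ' : StackSubst) :
    (t.inst σ κ).inst σ' κ' = t.inst (inst σ' κ' ∘ σ) (.comp σ' κ' κ) := by
  induction t generalizing σ κ σ' κ' with
  | var i => rfl
  | abs t ih =>
    have hσ : inst (liftSub σ') (κ'.rename (· + 1) id) ∘ liftSub σ = liftSub (inst σ' κ' ∘ σ) := by
      funext j
      cases j with
      | zero => rfl
      | succ j => exact congrFun (inst_rename_succ σ' κ') (σ j)
    simp only [inst, ih, StackSubst.comp_rename_succ, hσ]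
  | app t u iht ihu => simp only [inst, iht, ihu]
  | mu b t ih =>
    have hσ : inst (rename id (· + 1) ∘ σ') κ'.lift ∘ rename id (· + 1) ∘ σ
        = rename id (· + 1) ∘ inst σ' κ' ∘ σ := by
      rw [← Function.comp_assoc, inst_lift_rename_succ]; rfl
    simp only [inst, inst_appStack, ih, ← appStack_append, hσ, ← StackSubst.comp_lift]
    rfl

end Substitution

section SyntacticSubstitution

theorem renL_eq_rename (t : LM) (ρ : ℕ → ℕ) : t.renL ρ = t.rename ρ id := by
  induction t generalizing ρ <;> simp [renL, *]

theorem renM_eq_rename (t : LM) (δ : ℕ → ℕ) : t.renM δ = t.rename id δ := by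
  induction t generalizing δ <;> simp [renM, *]

theorem substL_eq_inst (t : LM) (σ : ℕ → LM) : t.substL σ = t.inst σ (.ofRename id) := by
  induction t generalizing σ with
  | var i => rfl
  | abs t ih =>
    rw [substL, ih, inst]
    congr 2
    funext j
    cases j with
    | zero => rfl
    | succ j => exact renL_eq_rename _ _
  | app t u iht ihu => rw [substL, inst, iht, ihu]
  | mu b t ih =>
    simp only [substL, inst, ih, renM_eq_rename, StackSubst.lift_ofRename, liftρ_id]; rfl

theorem substL_var (t : LM) : t.substL var = t :=
  (substL_eq_inst t var).trans (inst_id t)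

theorem subst0_eq_inst (u v : LM) : u.subst0 v = u.inst (scons v var) (.ofRename id) := by
  rw [subst0, substL_eq_inst]; rfl

theorem inst_scons_comp_rename_succ (v : LM) :
    inst (scons v var) (.ofRename id) ∘ rename (· + 1) id = id := by
  funext s; exact (inst_rename _ _ _ _ _).trans (inst_id s)

theorem subst0_inst_liftSub (u v : LM) (σ : ℕ → LM) (κ : StackSubst) :
    (u.inst (liftSub σ) (κ.rename (· + 1) id)).subst0 v = u.inst (scons v σ) κ := by
  rw [subst0_eq_inst, inst_inst, liftSub, comp_scons, ← Function.comp_assoc,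
    inst_scons_comp_rename_succ]
  congr 1
  funext j
  simp [StackSubst.comp, StackSubst.rename, StackSubst.ofRename, inst_scons_comp_rename_succ]

theorem inst_subst0 (u v : LM) (σ : ℕ → LM) (κ : StackSubst) :
    (u.subst0 v).inst σ κ
      = (u.inst (liftSub σ) (κ.rename (· + 1) id)).subst0 (v.inst σ κ) := by
  rw [subst0_inst_liftSub, subst0_eq_inst, inst_inst, comp_scons]
  rfl

theorem rename_subst0 (u v : LM) (ρ δ : ℕ → ℕ) :
    (u.subst0 v).rename ρ δ = (u.rename (liftρ ρ) δ).subst0 (v.rename ρ δ) := by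
  rw [← inst_var_ofRename, inst_subst0, liftSub_var, inst_var_ofRename v,
    ← inst_var_ofRename u]
  rfl

theorem star_eq_inst (v : LM) (k : ℕ) (t : LM) :
    star v k t = t.inst var fun j => (j, if j = k then [v] else []) := by
  induction t generalizing v k with
  | var i => rfl
  | abs t ih =>
    rw [star, ih, inst, renL_eq_rename]
    congr 2
    · funext j; cases j <;> rfl
    · funext j; simp only [StackSubst.rename]; split <;> rfl
  | app t u iht ihu => rw [star, inst, iht, ihu]
  | mu b t ih =>
    have hκ : StackSubst.lift (fun j => (j, if j = k then [v] else []))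
        = fun j => (j, if j = k + 1 then [v.rename id (· + 1)] else []) := by
      funext j
      cases j with
      | zero => rfl
      | succ j => simp only [StackSubst.lift, scons, StackSubst.rename, Nat.succ_inj]; split <;> rfl
    rw [star, ih, inst, renM_eq_rename, hκ]
    dsimp only
    split <;> rfl

theorem muApp_eq_inst (b : ℕ) (t v : LM) :
    muApp b t v = mu b ((t.inst var (.single [v])).appStack (StackSubst.single [v] b).2) := by
  have hκ : StackSubst.single [v] = fun j => (j, if j = 0 then [v.rename id (· + 1)] else []) := by
    funext j; cases j <;> rfl
  rw [muApp, star_eq_inst, renM_eq_rename, ← hκ]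
  cases b <;> rfl

theorem muRen_zero_eq_rename (c : ℕ) (s : LM) : muRen 0 c s = mu c.pred (s.rename id Nat.pred) := by
  cases c <;> simp only [muRen, renM_eq_rename] <;> congr 2

end SyntacticSubstitution

section FreeVariables

theorem inst_congr (t : LM) {σ σ' : ℕ → LM} {κ κ' : StackSubst}
    (hσ : ∀ i, freeL i t → σ i = σ' i) (hκ : ∀ k, freeM k t → κ k = κ' k) :
    t.inst σ κ = t.inst σ' κ' := by
  induction t generalizing σ σ' κ κ' with
  | var i => exact hσ i rfl
  | abs t ih =>
    refine congrArg abs (ih (fun i hi => ?_) fun k hk => ?_)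
    · cases i with
      | zero => rfl
      | succ i => simp only [liftSub, scons, Function.comp_apply, hσ i hi]
    · simp only [StackSubst.rename, hκ k hk]
  | app t u iht ihu =>
    exact congrArg₂ app (iht (fun i hi => hσ i (.inl hi)) fun k hk => hκ k (.inl hk))
      (ihu (fun i hi => hσ i (.inr hi)) fun k hk => hκ k (.inr hk))
  | mu b t ih =>
    have hlift : ∀ k, freeM k (mu b t) → κ.lift (k + 1) = κ'.lift (k + 1) := fun k hk => by
      simp only [StackSubst.lift, scons, StackSubst.rename, hκ k hk]
    have hb : κ.lift b = κ'.lift b := by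
      cases b with
      | zero => rfl
      | succ b => exact hlift b (.inl rfl)
    have ht : t.inst (rename id (· + 1) ∘ σ) κ.lift
        = t.inst (rename id (· + 1) ∘ σ') κ'.lift := by
      refine ih (fun i hi => ?_) fun k hk => ?_
      · simp only [Function.comp_apply, hσ i hi]
      · cases k with
        | zero => rfl
        | succ k => exact hlift k (.inr hk)
    rw [inst, inst, hb, ht]

theorem rename_eq_self {t : LM} {ρ δ : ℕ → ℕ} (hρ : ∀ i, freeL i t → ρ i = i)
    (hδ : ∀ k, freeM k t → δ k = k) : t.rename ρ δ = t := by
  rw [← inst_var_ofRename]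
  refine (inst_congr t (fun i hi => ?_) fun k hk => ?_).trans (inst_id t)
  · rw [Function.comp_apply, hρ i hi]
  · simp only [StackSubst.ofRename, hδ k hk, id]

theorem exists_liftρ_eq_succ {ρ : ℕ → ℕ} {j k : ℕ} (h : liftρ ρ j = k + 1) :
    ∃ i, j = i + 1 ∧ ρ i = k := by
  cases j with
  | zero => cases h
  | succ i => exact ⟨i, rfl, Nat.succ_inj.1 h⟩

theorem exists_freeL_of_freeL_rename {t : LM} {ρ δ : ℕ → ℕ} {k : ℕ} (h : freeL k (t.rename ρ δ)) :
    ∃ j, freeL j t ∧ ρ j = k := by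
  induction t generalizing ρ δ k with
  | var i => exact ⟨i, rfl, h⟩
  | abs t ih =>
    obtain ⟨j, hj, hjk⟩ := ih h
    obtain ⟨i, rfl, hik⟩ := exists_liftρ_eq_succ hjk
    exact ⟨i, hj, hik⟩
  | app t u iht ihu =>
    rcases h with h | h
    · exact (iht h).imp fun _ hj => hj.imp_left .inl
    · exact (ihu h).imp fun _ hj => hj.imp_left .inr
  | mu b t ih => exact ih h

theorem exists_freeM_of_freeM_rename {t : LM} {ρ δ : ℕ → ℕ} {k : ℕ} (h : freeM k (t.rename ρ δ)) :
    ∃ j, freeM j t ∧ δ j = k := by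
  induction t generalizing ρ δ k with
  | var i => exact h.elim
  | abs t ih => exact ih h
  | app t u iht ihu =>
    rcases h with h | h
    · exact (iht h).imp fun _ hj => hj.imp_left .inl
    · exact (ihu h).imp fun _ hj => hj.imp_left .inr
  | mu b t ih =>
    rcases h with h | h
    · obtain ⟨i, rfl, hik⟩ := exists_liftρ_eq_succ h
      exact ⟨i, .inl rfl, hik⟩
    · obtain ⟨j, hj, hjk⟩ := ih h
      obtain ⟨i, rfl, hik⟩ := exists_liftρ_eq_succ hjk
      exact ⟨i, .inr hj, hik⟩

theorem freeL_of_freeL_subst0 {u v : LM} {k : ℕ} (h : freeL k (u.subst0 v)) :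
    freeL (k + 1) u ∨ freeL k v := by
  by_contra! hk
  let ρ : ℕ → ℕ := Function.update id k (k + 1)
  have hρ : ∀ i, i ≠ k → ρ i = i := fun i hi => Function.update_of_ne hi _ _
  have hu : u.rename (liftρ ρ) id = u := by
    refine rename_eq_self (fun i hi => ?_) fun _ _ => rfl
    cases i with
    | zero => rfl
    | succ i => exact congrArg (· + 1) (hρ i (by rintro rfl; exact hk.1 hi))
  have hv : v.rename ρ id = v :=
    rename_eq_self (fun i hi => hρ i (by rintro rfl; exact hk.2 hi)) fun _ _ => rfl
  rw [← hu, ← hv, ← rename_subst0] at h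
  obtain ⟨j, -, hj⟩ := exists_freeL_of_freeL_rename h
  by_cases hjk : j = k
  · simp [ρ, hjk] at hj
  · exact hjk ((hρ j hjk).symm.trans hj)

/-- All the free λ-variables of the term are smaller than `m`. -/
def FreeLBelow (m : ℕ) (t : LM) : Prop := ∀ k, freeL k t → k < m

theorem FreeLBelow.mono {m m' : ℕ} {t : LM} (h : FreeLBelow m t) (hm : m ≤ m') :
    FreeLBelow m' t :=
  fun k hk => (h k hk).trans_le hm

theorem exists_freeLBelow (t : LM) : ∃ m, FreeLBelow m t := by
  induction t with
  | var i => exact ⟨i + 1, fun k hk => Nat.lt_succ_of_le (Eq.ge hk)⟩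
  | abs t ih => exact ih.imp fun m hm k hk => (Nat.lt_succ_self k).trans (hm _ hk)
  | app t u iht ihu =>
    obtain ⟨m, hm⟩ := iht
    obtain ⟨m', hm'⟩ := ihu
    exact ⟨max m m', fun k hk => hk.elim ((hm.mono (le_max_left ..)) k)
      ((hm'.mono (le_max_right ..)) k)⟩
  | mu _ _ ih => exact ih

theorem substL_congr {m : ℕ} {t : LM} {σ σ' : ℕ → LM} (ht : FreeLBelow m t)
    (hσ : ∀ i < m, σ i = σ' i) : t.substL σ = t.substL σ' := by
  rw [substL_eq_inst, substL_eq_inst]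
  exact inst_congr t (fun i hi => hσ i (ht i hi)) fun _ _ => rfl

theorem FreeLBelow.substL_eq_self {t : LM} (ht : FreeLBelow 0 t) (σ : ℕ → LM) :
    t.substL σ = t :=
  (substL_congr ht fun i hi => absurd hi i.not_lt_zero).trans (substL_var t)

/-- The term has no free μ-variable. -/
def MuClosed (t : LM) : Prop := ∀ k, ¬ freeM k t

theorem muClosed_iff {t : LM} : MuClosed t ↔ ∀ δ, t.rename id δ = t := by
  refine ⟨fun h δ => rename_eq_self (fun _ _ => rfl) fun k hk => (h k hk).elim, fun h k hk => ?_⟩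
  rw [← h (· + (k + 1))] at hk
  obtain ⟨j, -, hj⟩ := exists_freeM_of_freeM_rename hk
  lia

theorem muClosed_app {t u : LM} : MuClosed (app t u) ↔ MuClosed t ∧ MuClosed u := by
  simp only [MuClosed, freeM, not_or, forall_and]

theorem muClosed_appStack {t : LM} {π : List LM} :
    MuClosed (t.appStack π) ↔ MuClosed t ∧ ∀ v ∈ π, MuClosed v := by
  induction π generalizing t with
  | nil => simp
  | cons v π ih => simp [ih, muClosed_app, and_assoc]

theorem MuClosed.subst0 {u v : LM} (hu : MuClosed u) (hv : MuClosed v) :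
    MuClosed (u.subst0 v) :=
  muClosed_iff.2 fun δ => by
    rw [rename_subst0, liftρ_id, muClosed_iff.1 hu, muClosed_iff.1 hv]

theorem MuFree.muClosed {t : LM} (h : MuFree t) : MuClosed t := by
  induction t with
  | var i => exact fun _ => id
  | abs t ih => exact ih h
  | app t u iht ihu => exact muClosed_app.2 ⟨iht h.1, ihu h.2⟩
  | mu => exact h.elim

theorem MuFree.rename {t : LM} (h : MuFree t) (ρ δ : ℕ → ℕ) : MuFree (t.rename ρ δ) := by
  induction t generalizing ρ δ with
  | var i => trivial
  | abs t ih => exact ih h _ _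
  | app t u iht ihu => exact ⟨iht h.1 _ _, ihu h.2 _ _⟩
  | mu => exact h.elim

theorem MuFree.substL {t : LM} (h : MuFree t) {σ : ℕ → LM} (hσ : ∀ i, MuFree (σ i)) :
    MuFree (t.substL σ) := by
  induction t generalizing σ with
  | var i => exact hσ i
  | abs t ih =>
    refine ih h fun i => ?_
    cases i with
    | zero => trivial
    | succ i =>
      change ((σ i).renL (· + 1)).MuFree
      rw [renL_eq_rename]
      exact (hσ i).rename _ _
  | app t u iht ihu => exact ⟨iht h.1 hσ, ihu h.2 hσ⟩
  | mu => exact h.elim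

end FreeVariables

section Machine

/-- Weak head β-reduction. -/
inductive WeakHead : LM → LM → Prop
  | beta (u v : LM) : WeakHead (app (abs u) v) (u.subst0 v)
  | appL {t t' : LM} (v : LM) : WeakHead t t' → WeakHead (app t v) (app t' v)

namespace WeakHead

variable {t t' : LM}

theorem muClosed (h : WeakHead t t') (ht : MuClosed t) : MuClosed t' := by
  induction h with
  | beta u v => exact MuClosed.subst0 (u := u) (muClosed_app.1 ht).1 (muClosed_app.1 ht).2
  | appL v _ ih => exact muClosed_app.2 ((muClosed_app.1 ht).imp_left ih)

theorem hStep (h : WeakHead t t') : HStep t t' := by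
  induction h with
  | beta u v => exact .c1 u v
  | appL v h ih => exact .appL v (by cases h <;> exact id) ih

theorem beta_step (h : WeakHead t t') : Beta t t' := by
  induction h with
  | beta u v => exact .c1 u v
  | appL v _ ih => exact .appL v ih

theorem inst (h : WeakHead t t') (σ : ℕ → LM) (κ : StackSubst) :
    WeakHead (t.inst σ κ) (t'.inst σ κ) := by
  induction h with
  | beta u v => rw [inst_subst0]; exact .beta _ _
  | appL v _ ih => exact .appL _ ih

theorem appStack (h : WeakHead t t') (π : List LM) : WeakHead (t.appStack π) (t'.appStack π) := by
  induction π generalizing t t' with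
  | nil => exact h
  | cons v _ ih => exact ih (h.appL v)

end WeakHead

/-- The stack machine simulated by head reduction under a `μα`: a term facing a stack of
arguments either performs a weak head step or, if it is `μα[β]t`, hands its stack over to the
subterms of `t` named `α`. The name `0` stands for the initial continuation. -/
inductive Mach : LM → LM → Prop
  | weakHead {t t' : LM} : WeakHead t t' → Mach t t'
  | mu (b : ℕ) (t : LM) (π : List LM) : (StackSubst.push π b).1 = 0 →
      Mach ((mu b t).appStack π) ((t.inst var (.push π)).appStack (StackSubst.push π b).2)

theorem mach_mu_inst (b : ℕ) (t : LM) (σ : ℕ → LM) (κ : StackSubst) (π : List LM)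
    (hb : (scons (0, π) κ b).1 = 0) :
    Mach (((LM.mu b t).inst σ κ).appStack π)
      ((t.inst σ (scons (0, π) κ)).appStack (scons (0, π) κ b).2) := by
  have hren : inst var (.push π) ∘ rename id (· + 1) = id := by
    funext s; exact (inst_rename _ _ _ _ _).trans (inst_id s)
  have hκ : StackSubst.comp var (.push π) κ.lift = scons (0, π) κ := by
    funext j
    cases j with
    | zero => rfl
    | succ j =>
      have hj : ((κ j).2.map (rename id (· + 1))).map (inst var (.push π)) ++ [] = (κ j).2 := by
        rw [List.map_map, hren, List.map_id, List.append_nil]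
      exact congrArg (Prod.mk (κ j).1) hj
  obtain ⟨hb1, hb2⟩ := Prod.ext_iff.1 (congrFun hκ b)
  dsimp only [StackSubst.comp] at hb1 hb2
  have hσ : inst var (.push π) ∘ rename id (· + 1) ∘ σ = σ := congrArg (· ∘ σ) hren
  have hmach := Mach.mu (κ.lift b).1
    ((t.inst (rename id (· + 1) ∘ σ) κ.lift).appStack (κ.lift b).2) π (hb1.trans hb)
  rwa [inst_appStack, ← appStack_append, hb2, inst_inst, hκ, hσ] at hmach

theorem HRed.mu {t t' : LM} (b : ℕ) (h : HRed t t') : HRed (mu b t) (mu b t') :=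
  Relation.ReflTransGen.lift (LM.mu b) (fun _ _ => HStep.mu b) _ _ h

theorem HStep.app_appStack {x y z : LM} (h : HStep (app x y) z) (π : List LM) :
    HStep ((app x y).appStack π) (z.appStack π) := by
  induction π generalizing x y z with
  | nil => exact h
  | cons v _ ih => exact ih (h.appL v id)

theorem StackSubst.comp_single (v : LM) (π : List LM) :
    comp var (single π) (single [v]) = single (v :: π) := by
  have hv : (v.rename id (· + 1)).inst var (single π) = v.rename id (· + 1) := by
    rw [inst_rename, ← inst_var_ofRename]; rfl
  funext j
  cases j with
  | zero => exact congrArg (fun w => (0, w :: π.map (LM.rename id (· + 1)))) hv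
  | succ j => rfl

theorem hRed_mu_appStack (b : ℕ) (t : LM) (π : List LM) :
    HRed ((mu b t).appStack π)
      (mu b ((t.inst var (.single π)).appStack (StackSubst.single π b).2)) := by
  induction π generalizing t with
  | nil =>
    have hκ : StackSubst.single [] = .ofRename id := by funext j; cases j <;> rfl
    rw [hκ, inst_id]
    exact .refl
  | cons v π ih =>
    refine .head ((HStep.c2 b t v).app_appStack π) ?_
    have hb : (StackSubst.single [v] b).1 = b := by cases b <;> rfl
    have hπ : (StackSubst.single [v] b).2.map (inst var (.single π)) ++ (StackSubst.single π b).2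
        = (StackSubst.single (v :: π) b).2 := by
      rw [← StackSubst.comp_single v π, StackSubst.comp, hb]
    have hstep := ih ((t.inst var (.single [v])).appStack (StackSubst.single [v] b).2)
    rw [inst_appStack, ← appStack_append, hπ, inst_inst, StackSubst.comp_single] at hstep
    rw [muApp_eq_inst]
    exact hstep

theorem StackSubst.rename_pred_single (π : List LM) :
    (single π).rename id Nat.pred = push π := by
  have hπ : LM.rename id Nat.pred ∘ LM.rename id (· + 1) = id :=
    (rename_comp_rename _ _ _ _).trans (funext rename_id)
  funext j
  cases j with
  | zero => simp [rename, single, push, scons, hπ]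
  | succ j => rfl

theorem Mach.hRed_mu {t t' : LM} (h : Mach t t') : HRed (.mu 0 t) (.mu 0 t') := by
  cases h with
  | weakHead h => exact .single (.mu 0 h.hStep)
  | mu b t π hb =>
    have hpush := StackSubst.rename_pred_single π
    have hb0 : b.pred = 0 := by cases b with
      | zero => rfl
      | succ j => exact hb
    have hπ : (StackSubst.single π b).2.map (rename id Nat.pred) = (StackSubst.push π b).2 :=
      congrArg Prod.snd (congrFun hpush b)
    refine ((hRed_mu_appStack b t π).mu 0).tail ?_
    have hstep := HStep.s1 0 b ((t.inst var (.single π)).appStack (StackSubst.single π b).2)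
    rwa [muRen_zero_eq_rename, rename_appStack, rename_inst, hpush, hπ, hb0] at hstep

theorem StackSubst.single_zero_of_muClosed {π : List LM} (hπ : ∀ v ∈ π, MuClosed v) :
    single π 0 = (0, π) := by
  have : π.map (LM.rename id (· + 1)) = π :=
    (List.map_congr_left fun v hv => muClosed_iff.1 (hπ v hv) _).trans (List.map_id π)
  rw [single, scons, this]

theorem Mach.hRed_of_muClosed {t t' : LM} (h : Mach t t') (ht : MuClosed t) :
    (HRed t t' ∧ MuClosed t') ∨ HRed t (.mu 0 t') := by
  cases h with
  | weakHead h => exact .inl ⟨.single h.hStep, h.muClosed ht⟩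
  | mu b t π hb =>
    obtain ⟨hmu, hπ⟩ := muClosed_appStack.1 ht
    have hsingle := StackSubst.single_zero_of_muClosed hπ
    obtain rfl : b = 0 := by
      cases b with
      | zero => rfl
      | succ b => exact (hmu b (.inl rfl)).elim
    have ht : t.inst var (.single π) = t.inst var (.push π) := by
      refine inst_congr t (fun _ _ => rfl) fun k hk => ?_
      cases k with
      | zero => exact hsingle
      | succ k => exact (hmu k (.inr hk)).elim
    have hred := hRed_mu_appStack 0 t π
    rw [hsingle, ht] at hred
    exact .inr hred

/-- Many steps of the machine. -/
abbrev MachRed : LM → LM → Prop := Relation.ReflTransGen Mach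

theorem MachRed.hRed_of_muClosed {t t' : LM} (h : MachRed t t') (ht : MuClosed t) :
    (HRed t t' ∧ MuClosed t') ∨ HRed t (mu 0 t') := by
  induction h with
  | refl => exact .inl ⟨.refl, ht⟩
  | tail _ hstep ih =>
    rcases ih with ⟨hred, hclosed⟩ | hred
    · refine (hstep.hRed_of_muClosed hclosed).imp ?_ ?_
      · exact And.imp_left (Relation.ReflTransGen.trans hred)
      · exact Relation.ReflTransGen.trans hred
    · exact .inr (Relation.ReflTransGen.trans hred hstep.hRed_mu)

theorem MachRed.simMu_mu {t u : LM} (h : MachRed t u) (ht : MuClosed t) : SimMu t (mu 0 u) := by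
  rcases h.hRed_of_muClosed ht with ⟨hred, hclosed⟩ | hred
  · have hs2 := HStep.s2 u (hclosed 0)
    rw [renM_eq_rename, muClosed_iff.1 hclosed] at hs2
    exact ⟨u, hred, .single hs2⟩
  · exact ⟨mu 0 u, hred, .refl⟩

end Machine

section BetaReduction

/-- Many-step β-reduction. -/
abbrev BetaRed : LM → LM → Prop := Relation.ReflTransGen Beta

theorem BetaRed.appR (t : LM) {v v' : LM} (h : BetaRed v v') : BetaRed (app t v) (app t v') :=
  Relation.ReflTransGen.lift (app t) (fun _ _ => Beta.appR t) _ _ h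

theorem BetaRed.abs {t t' : LM} (h : BetaRed t t') : BetaRed (abs t) (abs t') :=
  Relation.ReflTransGen.lift LM.abs (fun _ _ => Beta.abs) _ _ h

theorem BetaRed.betaEq {t t' : LM} (h : BetaRed t t') : BetaEq t t' :=
  Relation.EqvGen.reflTransGen_le_eqvGen _ _ _ h

theorem Beta.rename {t t' : LM} (h : Beta t t') (ρ δ : ℕ → ℕ) :
    Beta (t.rename ρ δ) (t'.rename ρ δ) := by
  induction h generalizing ρ δ with
  | c1 u v => rw [rename_subst0]; exact .c1 _ _
  | appL v _ ih => exact .appL _ (ih _ _)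
  | appR v _ ih => exact .appR _ (ih _ _)
  | abs _ ih => exact .abs (ih _ _)
  | mu b _ ih => exact .mu _ (ih _ _)

theorem BetaRed.rename {t t' : LM} (h : BetaRed t t') (ρ δ : ℕ → ℕ) :
    BetaRed (t.rename ρ δ) (t'.rename ρ δ) :=
  Relation.ReflTransGen.lift (LM.rename ρ δ) (fun _ _ h => h.rename ρ δ) _ _ h

theorem Beta.freeL {t t' : LM} {k : ℕ} (h : Beta t t') (hk : t'.freeL k) : t.freeL k := by
  induction h generalizing k with
  | c1 u v => exact freeL_of_freeL_subst0 hk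
  | appL v _ ih => exact hk.imp_left ih
  | appR v _ ih => exact hk.imp_right ih
  | abs _ ih => exact ih hk
  | mu b _ ih => exact ih hk

/-- The renaming that turns the λ-variable `m` into the innermost bound variable:
`abs (t.rename (bindVar m) id)` is `λxₘ t`. -/
def bindVar (m : ℕ) : ℕ → ℕ := Function.update (· + 1) m 0

theorem rename_bindVar_subst0 {u : LM} {m : ℕ} (h : ¬ freeL m (abs u)) :
    (u.subst0 (var m)).rename (bindVar m) id = u := by
  rw [subst0_eq_inst, rename_inst, ← inst_id u, inst_inst]
  refine inst_congr u (fun i hi => ?_) fun _ _ => rfl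
  cases i with
  | zero => simp [scons, bindVar]
  | succ i =>
    have him : i ≠ m := by rintro rfl; exact h hi
    simp [scons, bindVar, Function.update_of_ne him]

theorem BetaRed.abs_of_app_var {m : ℕ} {s r : LM} (h : BetaRed (app s (var m)) r)
    (hr : ∀ s', r ≠ app s' (var m)) (hm : ¬ freeL m s) :
    BetaRed s (.abs (r.rename (bindVar m) id)) := by
  generalize hy : app s (var m) = y at h
  induction h using Relation.ReflTransGen.head_induction_on generalizing s with
  | refl => exact absurd hy.symm (hr s)
  | head hstep hred ih =>
    subst hy
    cases hstep with
    | c1 u =>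
      have hu := BetaRed.rename hred (bindVar m) id
      rw [rename_bindVar_subst0 hm] at hu
      exact hu.abs
    | appL _ hstep => exact .head hstep (ih (fun hfree => hm (hstep.freeL hfree)) rfl)
    | appR _ hstep => cases hstep

theorem rename_iterApp (ρ δ : ℕ → ℕ) (f x : LM) (n : ℕ) :
    (iterApp f n x).rename ρ δ = iterApp (f.rename ρ δ) n (x.rename ρ δ) := by
  induction n with
  | zero => rfl
  | succ n ih => simp only [iterApp, rename, ih]

theorem iterApp_var_ne_app_var {x m : ℕ} (h : x ≠ m) (f s : LM) (n : ℕ) :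
    iterApp f n (var x) ≠ app s (var m) := by
  rcases n with - | - | n <;> simp_all [iterApp]

theorem BetaRed.church_of_iterApp {t : LM} {m n : ℕ} (hm : FreeLBelow m t)
    (h : BetaRed (app (app t (var m)) (var (m + 1))) (iterApp (var (m + 1)) n (var m))) :
    BetaRed t (church n) := by
  have hsucc : ¬ freeL (m + 1) (app t (var m)) := by
    rintro (h | h)
    · exact absurd (hm _ h) (by lia)
    · exact m.succ_ne_self h.symm
  have h1 := h.abs_of_app_var (iterApp_var_ne_app_var m.succ_ne_self.symm _ · _) hsucc
  have h2 := h1.abs_of_app_var (by simp) fun hfree => (hm m hfree).false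
  simpa [church, rename_iterApp, bindVar, liftρ] using h2

end BetaReduction

end LM

section Semantics

universe u v

variable {S : Sig} {D : Type u} {V : Type v}

/-- An interpretation of the symbols of the signature `S`: the individuals range over `D` and the
truth values over `V`. -/
structure Interpretation (S : Sig) (D : Type u) (V : Type v) where
  fn : ∀ f : S.Fn, (Fin (S.arFn f) → D) → D
  pr : S.Pr → List D → V

/-- The operations on truth values that interpret `⊥`, `→` and the two quantifiers. -/
structure TruthAlgebra (V : Type v) where
  bot : V
  arr : V → V → V
  inf : Set V → V

/-- The interpretation of `¬`. -/
def TruthAlgebra.neg (M : TruthAlgebra V) (F : V) : V := M.arr F M.bot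

/-- The value of a first order term in the environment `e`. -/
def FOTerm.eval (I : Interpretation S D V) (e : ℕ → D) : FOTerm S → D
  | var i => e i
  | fn f ts => I.fn f fun i => (ts i).eval I e

/-- The truth value of a formula: `e` interprets its first order variables and `Φ` its predicate
variables. -/
def Form.interp (I : Interpretation S D V) (M : TruthAlgebra V) (e : ℕ → D)
    (Φ : ℕ → List D → V) : Form S → V
  | bot => M.bot
  | pr P ts => I.pr P (ts.map (FOTerm.eval I e))
  | pvar X ts => Φ X (ts.map (FOTerm.eval I e))
  | arr A B => M.arr (A.interp I M e Φ) (B.interp I M e Φ)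
  | fall A => M.inf (Set.range fun d => A.interp I M (scons d e) Φ)
  | pall A => M.inf (Set.range fun F => A.interp I M e (scons F Φ))

variable (I : Interpretation S D V) (M : TruthAlgebra V) (e : ℕ → D) (Φ : ℕ → List D → V)

namespace FOTerm

theorem eval_subst (σ : ℕ → FOTerm S) (t : FOTerm S) :
    (t.subst σ).eval I e = t.eval I (eval I e ∘ σ) := by
  induction t with
  | var i => rfl
  | fn f ts ih => simp only [subst, eval, ih]

theorem eval_rename (ρ : ℕ → ℕ) (t : FOTerm S) : (t.rename ρ).eval I e = t.eval I (e ∘ ρ) := by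
  induction t with
  | var i => rfl
  | fn f ts ih => simp only [rename, eval, ih]

theorem eval_comp_liftSub (σ : ℕ → FOTerm S) (d : D) :
    eval I (scons d e) ∘ liftSub σ = scons d (eval I e ∘ σ) := by
  funext i
  cases i with
  | zero => rfl
  | succ i => exact eval_rename I (scons d e) _ (σ i)

end FOTerm

/-- The equations of `E` hold in the interpretation. -/
def Interpretation.Satisfies (E : Set (FOTerm S × FOTerm S)) : Prop :=
  ∀ p ∈ E, ∀ e, p.1.eval I e = p.2.eval I e

variable {I} in
theorem Interpretation.Satisfies.eval_eq {E : Set (FOTerm S × FOTerm S)} (hI : I.Satisfies E)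
    {u v : FOTerm S} (h : EqE E u v) : u.eval I e = v.eval I e := by
  induction h with
  | rel u v h =>
    obtain ⟨p, hp, σ, rfl, rfl⟩ := h
    rw [FOTerm.eval_subst, FOTerm.eval_subst, hI p hp]
  | refl => rfl
  | symm _ _ _ ih => exact ih.symm
  | trans _ _ _ _ _ ih₁ ih₂ => exact ih₁.trans ih₂

namespace Form

theorem interp_substFO (σ : ℕ → FOTerm S) (A : Form S) :
    (A.substFO σ).interp I M e Φ = A.interp I M (FOTerm.eval I e ∘ σ) Φ := by
  have hmap : ∀ (σ : ℕ → FOTerm S) e (ts : List (FOTerm S)),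
      (ts.map (FOTerm.subst σ)).map (FOTerm.eval I e)
        = ts.map (FOTerm.eval I (FOTerm.eval I e ∘ σ)) := fun σ e ts => by
    rw [List.map_map]
    exact List.map_congr_left fun t _ => FOTerm.eval_subst I e σ t
  induction A generalizing σ e Φ with
  | bot => rfl
  | pr P ts => simp only [substFO, interp, hmap]
  | pvar X ts => simp only [substFO, interp, hmap]
  | arr A B ihA ihB => simp only [substFO, interp, ihA, ihB]
  | fall A ih => simp only [substFO, interp, ih, FOTerm.eval_comp_liftSub]
  | pall A ih => simp only [substFO, interp, ih]

theorem interp_rename2 (ρ : ℕ → ℕ) (A : Form S) :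
    (A.rename2 ρ).interp I M e Φ = A.interp I M e (Φ ∘ ρ) := by
  induction A generalizing ρ e Φ with
  | bot => rfl
  | pr P ts => rfl
  | pvar X ts => rfl
  | arr A B ihA ihB => simp only [rename2, interp, ihA, ihB]
  | fall A ih => simp only [rename2, interp, ih]
  | pall A ih =>
    simp only [rename2, interp, ih]
    congr 3 with F
    congr 1 with X
    cases X <;> rfl

/-- The environment that lists the arguments `l` of a predicate before the values of `e`. -/
def prependArgs (l : List D) (e : ℕ → D) : ℕ → D :=
  fun i => if h : i < l.length then l.get ⟨i, h⟩ else e (i - l.length)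

/-- Insertion of the predicate `F` at position `p` of the environment `Φ`. -/
def insertPred (p : ℕ) (F : List D → V) (Φ : ℕ → List D → V) : ℕ → List D → V :=
  fun X => if X = p then F else Φ (if p < X then X - 1 else X)

theorem insertPred_zero (F : List D → V) : insertPred 0 F Φ = scons F Φ := by
  funext X; cases X <;> simp [insertPred, scons]

theorem scons_insertPred (p : ℕ) (F G : List D → V) :
    scons G (insertPred p F Φ) = insertPred (p + 1) F (scons G Φ) := by
  funext X
  cases X with
  | zero => simp [insertPred, scons]
  | succ X =>
    rcases X with - | X
    · simp [insertPred, scons, eq_comm]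
    · simp only [insertPred, scons, Nat.add_right_cancel_iff, Nat.add_lt_add_iff_right,
        Nat.add_sub_cancel]
      split_ifs <;> rfl

/-- The predicate defined by a formula whose first variables are the arguments of the predicate. -/
def pred (G : Form S) : List D → V := fun l => G.interp I M (prependArgs l e) Φ

theorem interp_inst2 (G : Form S) (d p : ℕ) (A : Form S) :
    (inst2 G d p A).interp I M e Φ
      = A.interp I M e (insertPred p (G.pred I M (fun i => e (i + d)) fun X => Φ (X + p)) Φ) := by
  induction A generalizing d p e Φ with
  | bot => rfl
  | pr P ts => rfl
  | pvar X ts =>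
    by_cases h : X = p
    · simp only [inst2, h, if_true, interp, insertPred, interp_substFO, interp_rename2, pred]
      congr 1
      funext i
      simp only [prependArgs, List.length_map, Function.comp_apply]
      split
      · simp
      · rfl
    · simp only [inst2, h, if_false, interp, insertPred]
  | arr A B ihA ihB => simp only [inst2, interp, ihA, ihB]
  | fall A ih => simp only [inst2, interp, ih]; rfl
  | pall A ih => simp only [inst2, interp, ih, scons_insertPred]; rfl

theorem interp_inst2_0 (A G : Form S) :
    (A.inst2_0 G).interp I M e Φ = A.interp I M e (scons (G.pred I M e Φ) Φ) := by
  rw [inst2_0, interp_inst2, insertPred_zero]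
  rfl

theorem interp_substFO0 (A : Form S) (u : FOTerm S) :
    (A.substFO0 u).interp I M e Φ = A.interp I M (scons (u.eval I e) e) Φ := by
  rw [substFO0, interp_substFO]
  congr 1
  funext i
  cases i <;> rfl

theorem map_interp_shiftFO (Γ : List (Form S)) (d : D) :
    (Γ.map shiftFO).map (interp I M (scons d e) Φ) = Γ.map (interp I M e Φ) := by
  rw [List.map_map]
  exact List.map_congr_left fun A _ => interp_substFO I M (scons d e) Φ _ A

theorem map_interp_rename2_succ (Γ : List (Form S)) (F : List D → V) :
    (Γ.map (rename2 (· + 1))).map (interp I M e (scons F Φ)) = Γ.map (interp I M e Φ) := by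
  rw [List.map_map]
  exact List.map_congr_left fun A _ => interp_rename2 I M e (scons F Φ) _ A

end Form

end Semantics

section Naturals

/-- The interpretation of arithmetic in `ℕ`. -/
def natInterpretation (V : Type*) : Interpretation NatSig ℕ V where
  fn
    | .zero, _ => 0
    | .succ, ts => ts (0 : Fin 1) + 1
  pr := Empty.elim

variable {V : Type*}

theorem eval_numT (e : ℕ → ℕ) (n : ℕ) : (numT n).eval (natInterpretation V) e = n := by
  induction n with
  | zero => rfl
  | succ n ih => exact congrArg (· + 1) ih

theorem subst_numT (e : ℕ → ℕ) (t : FOTerm NatSig) :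
    t.subst (numT ∘ e) = numT (t.eval (natInterpretation V) e) := by
  induction t with
  | var i => rfl
  | fn f ts ih =>
    cases f with
    | zero => exact congrArg (FOTerm.fn (S := NatSig) NatFn.zero) (funext fun i => i.elim0)
    | succ =>
      refine congrArg (FOTerm.fn (S := NatSig) NatFn.succ) (funext fun i => ?_)
      obtain rfl : i = (0 : Fin 1) := Subsingleton.elim (α := Fin 1) i 0
      exact ih _

variable {E : Set (FOTerm NatSig × FOTerm NatSig)}

theorem Adequate.numT_injective (hE : Adequate E) {k l : ℕ} (h : EqE E (numT k) (numT l)) :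
    k = l := by
  induction k generalizing l with
  | zero => cases l with
    | zero => rfl
    | succ l => exact absurd (h.symm _ _) (hE.1 _)
  | succ k ih => cases l with
    | zero => exact absurd h (hE.1 _)
    | succ l => rw [ih (hE.2 _ _ h)]

theorem Adequate.satisfies (hE : Adequate E) : (natInterpretation V).Satisfies E :=
  fun p hp e => hE.numT_injective <| by
    rw [← subst_numT, ← subst_numT]
    exact .rel _ _ ⟨p, hp, _, rfl, rfl⟩

end Naturals

namespace LM

section Adequacy

universe u

/-- The first entries of the environment `σ` are related by `R` to the entries of `vs`. This is what
adequacy requires of a substitution, where `vs` lists the values of the types of a context. -/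
def Respects {α V : Type*} (R : α → V → Prop) (σ : ℕ → α) (vs : List V) : Prop :=
  ∀ i v, vs[i]? = some v → R (σ i) v

theorem Respects.nil {α V : Type*} (R : α → V → Prop) (σ : ℕ → α) : Respects R σ [] :=
  fun _ _ h => by cases h

theorem Respects.cons {α V : Type*} {R : α → V → Prop} {σ : ℕ → α} {vs : List V} {a : α} {v : V}
    (ha : R a v) (hσ : Respects R σ vs) : Respects R (scons a σ) (v :: vs)
  | 0, _, h => Option.some_inj.1 h ▸ ha
  | i + 1, w, h => hσ i w h

theorem Respects.of_map_getElem? {α V F : Type*} {R : α → V → Prop} {σ : ℕ → α} {f : F → V}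
    {Γ : List F} (hσ : Respects R σ (Γ.map f)) {i : ℕ} {A : F} (h : Γ[i]? = some A) :
    R (σ i) (f A) :=
  hσ i _ (by rw [List.getElem?_map, h]; rfl)

/-- The terms that land in the pole `P` when applied to a stack of the falsity value `S`. -/
def realizers (P : Set LM) (S : Set (List LM)) : Set LM := {t | ∀ π ∈ S, t.appStack π ∈ P}

/-- The classical realizability interpretation with pole `P`: truth values are falsity values,
that is, sets of stacks. -/
def falsityAlgebra (P : Set LM) : TruthAlgebra (Set (List LM)) where
  bot := {[]}
  arr S S' := Set.image2 List.cons (realizers P S) S'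
  inf := Set.sUnion

variable {S : Sig} {D : Type u} {E : Set (FOTerm S × FOTerm S)} {Γ Δ : List (Form S)} {t : LM}
  {A : Form S}

theorem _root_.FD2.inst_mem_realizers {I : Interpretation S D (Set (List LM))} {P : Set LM}
    (h : FD2 S E Γ t A Δ) (hI : I.Satisfies E) (hP : ∀ t t', Mach t t' → t' ∈ P → t ∈ P)
    {e : ℕ → D} {Φ : ℕ → List D → Set (List LM)} {σ : ℕ → LM} {κ : StackSubst}
    (hσ : Respects (· ∈ realizers P ·) σ (Γ.map (Form.interp I (falsityAlgebra P) e Φ)))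
    (hκ : Respects (fun k F => k.1 = 0 ∧ k.2 ∈ F) κ
      (Δ.map (Form.interp I (falsityAlgebra P) e Φ))) :
    t.inst σ κ ∈ realizers P (A.interp I (falsityAlgebra P) e Φ) := by
  induction h generalizing e Φ σ κ with
  | var h => exact hσ.of_map_getElem? h
  | @absI _ _ _ t _ _ ih =>
    rintro _ ⟨v, hv, π, hπ, rfl⟩
    have hstep := WeakHead.beta (t.inst (liftSub σ) (κ.rename (· + 1) id)) v
    rw [subst0_inst_liftSub] at hstep
    exact hP _ _ (.weakHead (hstep.appStack π)) (ih (hσ.cons hv) hκ π hπ)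
  | appE _ _ ihu ihv => exact fun π hπ => ihu hσ hκ _ ⟨_, ihv hσ hκ, π, hπ, rfl⟩
  | fallI _ ih =>
    rintro π ⟨_, ⟨d, rfl⟩, hπ⟩
    exact ih (by rwa [Form.map_interp_shiftFO]) (by rwa [Form.map_interp_shiftFO]) π hπ
  | fallE u _ ih =>
    rw [Form.interp_substFO0]
    exact fun π hπ => ih hσ hκ π ⟨_, ⟨_, rfl⟩, hπ⟩
  | pallI _ ih =>
    rintro π ⟨_, ⟨F, rfl⟩, hπ⟩
    exact ih (by rwa [Form.map_interp_rename2_succ]) (by rwa [Form.map_interp_rename2_succ]) π hπ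
  | pallE G _ ih =>
    rw [Form.interp_inst2_0]
    exact fun π hπ => ih hσ hκ π ⟨_, ⟨_, rfl⟩, hπ⟩
  | eqE _ huv ih =>
    rw [Form.interp_substFO0, ← hI.eval_eq e huv, ← Form.interp_substFO0]
    exact ih hσ hκ
  | muR _ ha ih =>
    intro π hπ
    have hκ' := hκ.cons (a := (0, π)) ⟨rfl, hπ⟩
    obtain ⟨hname, hstack⟩ := hκ'.of_map_getElem? (Γ := _ :: _) ha
    exact hP _ _ (mach_mu_inst _ _ σ κ π hname) (ih hσ hκ' _ hstack)

/-- Saturated sets of λ-terms: the truth values of the realizability interpretation of `AF2`. -/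
structure SaturatedSet where
  carrier : Set LM
  muFree : ∀ {t}, t ∈ carrier → MuFree t
  mem_of_weakHead : ∀ {t t'}, MuFree t → WeakHead t t' → t' ∈ carrier → t ∈ carrier

/-- The interpretation of types by saturated sets, where `⊥` is interpreted by `B`. -/
def saturatedAlgebra (B : SaturatedSet) : TruthAlgebra SaturatedSet where
  bot := B
  arr F G :=
    { carrier := {t | MuFree t ∧ ∀ v ∈ F.carrier, app t v ∈ G.carrier}
      muFree := And.left
      mem_of_weakHead := fun ht hstep ht' => ⟨ht, fun v hv =>
        G.mem_of_weakHead ⟨ht, F.muFree hv⟩ (hstep.appL v) (ht'.2 v hv)⟩ }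
  inf Fs :=
    { carrier := {t | MuFree t ∧ ∀ F ∈ Fs, t ∈ F.carrier}
      muFree := And.left
      mem_of_weakHead := fun ht hstep ht' =>
        ⟨ht, fun F hF => F.mem_of_weakHead ht hstep (ht'.2 F hF)⟩ }

theorem weakHead_app_abs_substL (t v : LM) (σ : ℕ → LM) :
    WeakHead (app ((abs t).substL σ) v) (t.substL (scons v σ)) := by
  rw [substL_eq_inst, substL_eq_inst, ← subst0_inst_liftSub]
  exact .beta _ _

theorem _root_.AF2LM.muFree (h : AF2LM S E Γ t A) : MuFree t := by
  induction h with
  | var => trivial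
  | appE _ _ ihu ihv => exact ⟨ihu, ihv⟩
  | _ => assumption

theorem _root_.AF2LM.freeLBelow (h : AF2LM S E Γ t A) : FreeLBelow Γ.length t := by
  induction h with
  | var h => rintro k rfl; exact (List.getElem?_eq_some_iff.1 h).1
  | absI _ ih => exact fun k hk => Nat.succ_lt_succ_iff.1 (ih _ hk)
  | appE _ _ ihu ihv => exact fun k hk => hk.elim (ihu k) (ihv k)
  | fallI _ ih => rwa [List.length_map] at ih
  | pallI _ ih => rwa [List.length_map] at ih
  | _ => assumption

theorem _root_.AF2LM.substL_mem {I : Interpretation S D SaturatedSet} {B : SaturatedSet}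
    (h : AF2LM S E Γ t A) (hI : I.Satisfies E) {e : ℕ → D} {Φ : ℕ → List D → SaturatedSet}
    {σ : ℕ → LM} (hfree : ∀ i, MuFree (σ i))
    (hσ : Respects (· ∈ ·.carrier) σ (Γ.map (Form.interp I (saturatedAlgebra B) e Φ))) :
    t.substL σ ∈ (A.interp I (saturatedAlgebra B) e Φ).carrier := by
  have hsubst := h.muFree.substL hfree
  induction h generalizing e Φ σ with
  | var h => exact hσ.of_map_getElem? h
  | absI h ih =>
    refine ⟨hsubst, fun v hv => ?_⟩
    have hv' := SaturatedSet.muFree _ hv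
    have hfree' : ∀ i, MuFree (scons v σ i) := fun i => by
      cases i with
      | zero => exact hv'
      | succ i => exact hfree i
    exact SaturatedSet.mem_of_weakHead _ ⟨hsubst, hv'⟩ (weakHead_app_abs_substL _ v σ)
      (ih hfree' (hσ.cons hv) (h.muFree.substL hfree'))
  | appE _ _ ihu ihv => exact (ihu hfree hσ hsubst.1).2 _ (ihv hfree hσ hsubst.2)
  | fallI _ ih =>
    refine ⟨hsubst, ?_⟩
    rintro _ ⟨d, rfl⟩
    exact ih hfree (by rwa [Form.map_interp_shiftFO]) hsubst
  | fallE u _ ih =>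
    rw [Form.interp_substFO0]
    exact (ih hfree hσ hsubst).2 _ ⟨_, rfl⟩
  | pallI _ ih =>
    refine ⟨hsubst, ?_⟩
    rintro _ ⟨F, rfl⟩
    exact ih hfree (by rwa [Form.map_interp_rename2_succ]) hsubst
  | pallE G _ ih =>
    rw [Form.interp_inst2_0]
    exact (ih hfree hσ hsubst).2 _ ⟨_, rfl⟩
  | eqE _ huv ih =>
    rw [Form.interp_substFO0, ← hI.eval_eq e huv, ← Form.interp_substFO0]
    exact ih hfree hσ hsubst

end Adequacy

end LM

namespace LM

section ClassicalIntegers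

/-- The falsity value of the `i`-th iterate of `b` on `a`: the stacks that `a` meets in the pole
`P`, if `i = 0`, and those that `(b)t` meets in `P` for all realizers `t` of the previous falsity
value, otherwise. -/
def iterStacks (P : Set LM) (a b : LM) : ℕ → Set (List LM)
  | 0 => {π | a.appStack π ∈ P}
  | i + 1 => {π | ∀ t ∈ realizers P (iterStacks P a b i), (app b t).appStack π ∈ P}

theorem iterApp_mem_realizers (P : Set LM) (a b : LM) (i : ℕ) :
    iterApp b i a ∈ realizers P (iterStacks P a b i) := by
  induction i with
  | zero => exact fun _ hπ => hπ
  | succ i ih => exact fun _ hπ => hπ _ ih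

theorem app_app_mem_realizers {E : Set (FOTerm NatSig × FOTerm NatSig)} (hE : Adequate E)
    {P : Set LM} (hP : ∀ t t', Mach t t' → t' ∈ P → t ∈ P) {θ : LM} {n : ℕ}
    (hθ : FD2 NatSig E [] θ (NForm (numT n)) []) (a b : LM) :
    app (app θ a) b ∈ realizers P (iterStacks P a b n) := by
  intro π hπ
  have h := hθ.inst_mem_realizers hE.satisfies hP (e := fun _ => 0) (Φ := fun _ _ => ∅)
    (.nil _ var) (.nil _ (StackSubst.ofRename id))
  rw [inst_id] at h
  refine h (a :: b :: π) ⟨_, ⟨fun l => iterStacks P a b (l.headD 0), rfl⟩,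
    a, fun _ ha => ha, b :: π, ⟨b, ?_, π, ?_, rfl⟩, rfl⟩
  · rintro _ ⟨_, ⟨i, rfl⟩, t, ht, ρ, hρ, rfl⟩
    exact hρ t ht
  · change π ∈ iterStacks P a b ((numT n).eval _ _)
    rwa [eval_numT]

end ClassicalIntegers

section IterTable

/-- A Gödel numbering of λμ-terms, which shows that they are countable. -/
def code : LM → ℕ
  | var i => Nat.pair 0 i
  | abs t => Nat.pair 1 t.code
  | app t u => Nat.pair 2 (Nat.pair t.code u.code)
  | mu b t => Nat.pair 3 (Nat.pair b t.code)

theorem code_injective : Function.Injective code := by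
  intro t
  induction t with
  | var i => intro u h; cases u <;> simp_all [code, Nat.pair_eq_pair]
  | abs t ih =>
    intro u h
    cases u with
    | abs u => rw [ih (Nat.pair_eq_pair.1 h).2]
    | _ => simp [code, Nat.pair_eq_pair] at h
  | app t u iht ihu =>
    intro w h
    cases w with
    | app t' u' =>
      obtain ⟨ht, hu⟩ := Nat.pair_eq_pair.1 (Nat.pair_eq_pair.1 h).2
      rw [iht ht, ihu hu]
    | _ => simp [code, Nat.pair_eq_pair] at h
  | mu b t ih =>
    intro u h
    cases u with
    | mu c u =>
      obtain ⟨hb, ht⟩ := Nat.pair_eq_pair.1 (Nat.pair_eq_pair.1 h).2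
      rw [hb, ih ht]
    | _ => simp [code, Nat.pair_eq_pair] at h

instance : Countable LM := code_injective.countable

/-- An enumeration of iterations, where the λ-variable `m` stands for the `index m`-th iterate of
`step m` on `base m`. The variables of `base m` and `step m` have to come before `m`, and each
iteration is listed infinitely often. -/
structure IterTable where
  index : ℕ → ℕ
  base : ℕ → LM
  step : ℕ → LM
  base_below : ∀ m, FreeLBelow m (base m)
  step_below : ∀ m, FreeLBelow m (step m)
  exists_entry : ∀ i a b K, ∃ m ≥ K, index m = i ∧ base m = a ∧ step m = b

theorem IterTable.nonempty : Nonempty IterTable := by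
  classical
  have : Nonempty LM := ⟨var 0⟩
  obtain ⟨g, hg⟩ := exists_surjective_nat (ℕ × LM × LM)
  have hid : ∀ m, FreeLBelow m (abs (var 0)) := fun m k hk => by cases hk
  let f : ℕ → ℕ × LM × LM := fun m =>
    if FreeLBelow m (g m.unpair.1).2.1 ∧ FreeLBelow m (g m.unpair.1).2.2 then g m.unpair.1
    else (0, abs (var 0), abs (var 0))
  have hf : ∀ m, FreeLBelow m (f m).2.1 ∧ FreeLBelow m (f m).2.2 := fun m => by
    by_cases h : FreeLBelow m (g m.unpair.1).2.1 ∧ FreeLBelow m (g m.unpair.1).2.2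
    · simpa only [f, if_pos h] using h
    · simpa only [f, if_neg h] using ⟨hid m, hid m⟩
  refine ⟨⟨fun m => (f m).1, fun m => (f m).2.1, fun m => (f m).2.2, fun m => (hf m).1,
    fun m => (hf m).2, fun i a b K => ?_⟩⟩
  obtain ⟨k, hk⟩ := hg (i, a, b)
  obtain ⟨ma, ha⟩ := exists_freeLBelow a
  obtain ⟨mb, hb⟩ := exists_freeLBelow b
  have hle := Nat.right_le_pair k (K + ma + mb)
  have hfm : f (Nat.pair k (K + ma + mb)) = (i, a, b) := by
    simp only [f, Nat.unpair_pair, hk]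
    exact if_pos ⟨ha.mono (by lia), hb.mono (by lia)⟩
  exact ⟨Nat.pair k (K + ma + mb), by lia, by simp only [hfm, and_self]⟩

namespace IterTable

variable (𝒯 : IterTable)

/-- The substitution that agrees with `σ` below `M` and replaces each later variable by the
iteration it stands for. -/
def extend (M : ℕ) (σ : ℕ → LM) (m : ℕ) : LM :=
  if m < M then σ m
  else
    let σ' : ℕ → LM := fun i => if i < m then extend M σ i else var i
    iterApp ((𝒯.step m).substL σ') (𝒯.index m) ((𝒯.base m).substL σ')

variable {M : ℕ} {σ : ℕ → LM}

theorem extend_of_lt {m : ℕ} (hm : m < M) : 𝒯.extend M σ m = σ m := by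
  rw [extend, if_pos hm]

theorem extend_of_le {m : ℕ} (hm : M ≤ m) :
    𝒯.extend M σ m = iterApp ((𝒯.step m).substL (𝒯.extend M σ)) (𝒯.index m)
      ((𝒯.base m).substL (𝒯.extend M σ)) := by
  rw [extend, if_neg hm.not_gt]
  have heq : ∀ i < m, (if i < m then 𝒯.extend M σ i else var i) = 𝒯.extend M σ i :=
    fun i hi => if_pos hi
  simp only [substL_congr (𝒯.step_below m) heq, substL_congr (𝒯.base_below m) heq]

/-- The substitution `σ` replaces `x₀` by itself, `x₁` by a term that behaves like `n` with respect
to the pole `P`, and every other variable by a realizer of the iteration it stands for. -/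
structure Realizes (P : Set LM) (n : ℕ) (σ : ℕ → LM) : Prop where
  zero : σ 0 = var 0
  one : ∀ a b, app (app (σ 1) a) b ∈ realizers P (iterStacks P a b n)
  entry : ∀ m ≥ 2, σ m ∈ realizers P
    (iterStacks P ((𝒯.base m).substL σ) ((𝒯.step m).substL σ) (𝒯.index m))

variable {P : Set LM} {n : ℕ} {𝒯}

theorem realizes_extend (hM : 2 ≤ M) (h0 : σ 0 = var 0)
    (h1 : ∀ a b, app (app (σ 1) a) b ∈ realizers P (iterStacks P a b n))
    (h2 : ∀ m, 2 ≤ m → m < M → σ m ∈ realizers P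
      (iterStacks P ((𝒯.base m).substL σ) ((𝒯.step m).substL σ) (𝒯.index m))) :
    𝒯.Realizes P n (𝒯.extend M σ) where
  zero := by rwa [𝒯.extend_of_lt (by lia)]
  one := by rwa [𝒯.extend_of_lt (by lia)]
  entry m hm := by
    rcases lt_or_ge m M with hmM | hmM
    · have hext : ∀ i < m, 𝒯.extend M σ i = σ i := fun i hi => 𝒯.extend_of_lt (hi.trans hmM)
      rw [𝒯.extend_of_lt hmM, substL_congr (𝒯.base_below m) hext,
        substL_congr (𝒯.step_below m) hext]
      exact h2 m hm hmM
    · rw [𝒯.extend_of_le hmM]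
      exact iterApp_mem_realizers _ _ _ _

theorem Realizes.exists_update (hσ : 𝒯.Realizes P n σ) {m : ℕ} (hm : 2 ≤ m) {v : LM}
    (hv : v ∈ realizers P
      (iterStacks P ((𝒯.base m).substL σ) ((𝒯.step m).substL σ) (𝒯.index m))) :
    ∃ σ', 𝒯.Realizes P n σ' ∧ σ' m = v ∧ ∀ i < m, σ' i = σ i := by
  have hupd : ∀ i < m, Function.update σ m v i = σ i :=
    fun i hi => Function.update_of_ne hi.ne _ _
  refine ⟨𝒯.extend (m + 1) (Function.update σ m v), realizes_extend (by lia) ?_ ?_ ?_, ?_, ?_⟩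
  · rw [hupd 0 (by lia), hσ.zero]
  · rw [hupd 1 (by lia)]
    exact hσ.one
  · intro k hk hkm
    have hupd' : ∀ i < k, Function.update σ m v i = σ i := fun i hi => hupd i (by lia)
    rw [substL_congr (𝒯.base_below k) hupd', substL_congr (𝒯.step_below k) hupd']
    rcases Nat.lt_succ_iff_lt_or_eq.1 hkm with hkm | rfl
    · rw [hupd k hkm]
      exact hσ.entry k hk
    · rwa [Function.update_self]
  · rw [𝒯.extend_of_lt (Nat.lt_succ_self m), Function.update_self]
  · exact fun i hi => (𝒯.extend_of_lt (by lia)).trans (hupd i hi)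

end IterTable

end IterTable

section Storage

/-- The terms that the machine reduces to `(f)σ(τ)` for some substitution `σ`, where `f` is the
variable `0`. -/
def storagePole (τ : LM) : Set LM :=
  {t | ∃ σ : ℕ → LM, σ 0 = var 0 ∧ MachRed t (app (var 0) (τ.substL σ))}

theorem mem_storagePole_of_mach {τ : LM} (t t' : LM) (h : Mach t t') :
    t' ∈ storagePole τ → t ∈ storagePole τ :=
  fun ⟨σ, hσ, hred⟩ => ⟨σ, hσ, .head h hred⟩

/-- The interpretation of `⊥`: the λ-terms `t` such that, for some `τ` reducing to the Church
integer `n`, every substitution that realizes the table `𝒯` makes `t` store `τ`. -/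
def storageSet (𝒯 : IterTable) (n : ℕ) : SaturatedSet where
  carrier := {t | MuFree t ∧ ∃ τ, MuFree τ ∧ BetaRed τ (church n) ∧
    ∀ σ, 𝒯.Realizes (storagePole τ) n σ → t.substL σ ∈ storagePole τ}
  muFree := And.left
  mem_of_weakHead := by
    rintro t t' ht hstep ⟨-, τ, hτ, hred, hstore⟩
    refine ⟨ht, τ, hτ, hred, fun σ hσ => mem_storagePole_of_mach _ _ ?_ (hstore σ hσ)⟩
    rw [substL_eq_inst, substL_eq_inst]
    exact .weakHead (hstep.inst _ _)

/-- The interpretation of types by saturated sets where `⊥` is interpreted by `storageSet 𝒯 n`. -/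
abbrev storageAlgebra (𝒯 : IterTable) (n : ℕ) : TruthAlgebra SaturatedSet :=
  saturatedAlgebra (storageSet 𝒯 n)

variable {𝒯 : IterTable} {n : ℕ}

theorem var_mem_neg_index {F : ℕ → SaturatedSet} {a b : LM}
    (ha : a ∈ ((storageAlgebra 𝒯 n).neg (F 0)).carrier)
    (hb : ∀ i, ∀ t ∈ ((storageAlgebra 𝒯 n).neg (F i)).carrier,
      app b t ∈ ((storageAlgebra 𝒯 n).neg (F (i + 1))).carrier)
    {m : ℕ} (hm : 2 ≤ m) (hbase : 𝒯.base m = a) (hstep : 𝒯.step m = b) :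
    var m ∈ ((storageAlgebra 𝒯 n).neg (F (𝒯.index m))).carrier := by
  induction hi : 𝒯.index m generalizing m with
  | zero =>
    refine ⟨trivial, fun c hc => ?_⟩
    obtain ⟨hfree, τ, hτ, hred, hstore⟩ := ha.2 c hc
    refine ⟨⟨trivial, hfree.2⟩, τ, hτ, hred, fun σ hσ => ?_⟩
    have hentry := hσ.entry m hm
    rw [hi, hbase, hstep] at hentry
    exact hentry [c.substL σ] (hstore σ hσ)
  | succ i ih =>
    refine ⟨trivial, fun c hc => ?_⟩
    obtain ⟨K, hK⟩ := exists_freeLBelow c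
    obtain ⟨k, hk, hindex', hbase', hstep'⟩ := 𝒯.exists_entry i a b (max 2 K)
    obtain ⟨hk2, hkK⟩ := max_le_iff.1 hk
    obtain ⟨hfree, τ, hτ, hred, hstore⟩ := (hb i _ (ih hk2 hbase' hstep' hindex')).2 c hc
    refine ⟨⟨trivial, hfree.2⟩, τ, hτ, hred, fun σ hσ => ?_⟩
    have hentry := hσ.entry m hm
    rw [hi, hbase, hstep] at hentry
    refine hentry [c.substL σ] fun t ht => ?_
    rw [← hbase', ← hstep', ← hindex'] at ht
    obtain ⟨σ', hσ', hval, hagree⟩ := hσ.exists_update hk2 ht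
    have := hstore σ' hσ'
    rwa [substL, substL, substL, hval, ← hstep', substL_congr (𝒯.step_below k) hagree, hstep',
      substL_congr (hK.mono hkK) hagree] at this

theorem var_one_mem_godel {e : ℕ → ℕ} {Φ : ℕ → List ℕ → SaturatedSet} :
    var 1 ∈ ((NForm (FOTerm.var 0)).godel.interp (natInterpretation _)
      (storageAlgebra 𝒯 n) (scons n e) Φ).carrier := by
  refine ⟨trivial, ?_⟩
  rintro _ ⟨F, rfl⟩
  refine ⟨trivial, fun a ha => ⟨⟨trivial, ha.1⟩, fun b hb => ?_⟩⟩
  refine ⟨⟨⟨trivial, ha.1⟩, hb.1⟩, fun c hc => ?_⟩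
  obtain ⟨K, hK⟩ := exists_freeLBelow c
  obtain ⟨m, hm, hindex, hbase, hstep⟩ := 𝒯.exists_entry n a b (max 2 K)
  obtain ⟨hm2, hmK⟩ := max_le_iff.1 hm
  have hvar := var_mem_neg_index (F := fun i => F [i]) ha
    (fun i => (hb.2 _ ⟨i, rfl⟩).2) hm2 hbase hstep
  rw [hindex] at hvar
  obtain ⟨hfree, τ, hτ, hred, hstore⟩ := hvar.2 c hc
  refine ⟨⟨⟨⟨trivial, ha.1⟩, hb.1⟩, hfree.2⟩, τ, hτ, hred, fun σ hσ => ?_⟩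
  have hone := hσ.one ((𝒯.base m).substL σ) ((𝒯.step m).substL σ)
  rw [← hindex] at hone
  obtain ⟨σ', hσ', hval, hagree⟩ := hσ.exists_update hm2 hone
  have := hstore σ' hσ'
  rwa [substL, substL, hval, hbase, hstep, substL_congr (hK.mono hmK) hagree] at this

/-- The λ-terms that β-reduce to `(f)ᵏx`, where `x` and `f` are the variables `m` and `m + 1`. -/
def iterSet (m k : ℕ) : SaturatedSet where
  carrier := {t | MuFree t ∧ BetaRed t (iterApp (var (m + 1)) k (var m))}
  muFree := And.left
  mem_of_weakHead ht hstep ht' := ⟨ht, .head hstep.beta_step ht'.2⟩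

theorem betaRed_church_of_mem {B : SaturatedSet} {e : ℕ → ℕ} {Φ : ℕ → List ℕ → SaturatedSet}
    {c : LM} (hc : c ∈ ((NForm (FOTerm.var 0)).interp (natInterpretation _)
      (saturatedAlgebra B) (scons n e) Φ).carrier) : BetaRed c (church n) := by
  obtain ⟨m, hm⟩ := exists_freeLBelow c
  have hx : var m ∈ (iterSet m 0).carrier := ⟨trivial, .refl⟩
  have hf : ∀ k, ∀ t ∈ (iterSet m k).carrier, app (var (m + 1)) t ∈ (iterSet m (k + 1)).carrier :=
    fun k t ht => ⟨⟨trivial, ht.1⟩, BetaRed.appR _ ht.2⟩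
  have hcx := (hc.2 _ ⟨fun l => iterSet m (l.headD 0), rfl⟩).2 _ hx
  refine BetaRed.church_of_iterApp hm (hcx.2 (var (m + 1)) ⟨trivial, ?_⟩).2
  rintro _ ⟨k, rfl⟩
  exact ⟨trivial, hf k⟩

theorem var_zero_mem_neg {e : ℕ → ℕ} {Φ : ℕ → List ℕ → SaturatedSet} :
    var 0 ∈ ((NForm (FOTerm.var 0)).neg.interp (natInterpretation _)
      (storageAlgebra 𝒯 n) (scons n e) Φ).carrier := by
  refine ⟨trivial, fun c hc => ?_⟩
  have hfree := SaturatedSet.muFree _ hc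
  refine ⟨⟨trivial, hfree⟩, c, hfree, betaRed_church_of_mem hc, fun σ hσ => ⟨σ, hσ.zero, ?_⟩⟩
  rw [substL, substL, hσ.zero]

theorem _root_.AF2LM.app_app_mem_storageSet {E : Set (FOTerm NatSig × FOTerm NatSig)}
    (hE : Adequate E) {T : LM} (hT : AF2LM NatSig E [] T storType) :
    app (app T (var 1)) (var 0) ∈ (storageSet 𝒯 n).carrier := by
  have h := hT.substL_mem hE.satisfies (B := storageSet 𝒯 n) (e := fun _ => 0)
    (Φ := fun _ _ => storageSet 𝒯 n) (σ := var) (fun _ => trivial) (.nil _ _)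
  rw [substL_var] at h
  exact ((h.2 _ ⟨n, rfl⟩).2 _ var_one_mem_godel).2 _ var_zero_mem_neg

end Storage

end LM

open LM in
/-- Parigot's storage theorem for the λμ-calculus : if
`⊢_AF2 T : ∀x{N^g[x] → ¬¬N[x]}`, then `T` is a storage operator for classical
integers : for every `n` there is a λ-term `τₙ ≃β n̲` such that for every
classical integer `θₙ` of value `n` (closed λμ-term with
`⊢_FD2 θₙ : N[sⁿ(0)]`) there is a substitution `σ` with
`(T)θₙf ∼μ μα[α](f)σ(τₙ)` (`f` a fresh variable). -/
theorem stmt19 (E : Set (FOTerm NatSig × FOTerm NatSig)) (hE : Adequate E)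
    (T : LM) (hT : AF2LM NatSig E [] T storType) :
    ∀ n : ℕ, ∃ τ : LM, MuFree τ ∧ BetaEq τ (church n) ∧
      ∀ θ : LM, ClosedLM θ → FD2 NatSig E [] θ (NForm (numT n)) [] →
        ∃ σ : ℕ → LM, σ 0 = var 0 ∧
          SimMu (app (app T θ) (var 0)) (mu 0 (app (var 0) (τ.substL σ))) := by
  intro n
  obtain ⟨𝒯⟩ := IterTable.nonempty
  obtain ⟨-, τ, hτ, hred, hstore⟩ := hT.app_app_mem_storageSet hE (𝒯 := 𝒯) (n := n)
  refine ⟨τ, hτ, BetaRed.betaEq hred, fun θ hθ hθn => ?_⟩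
  have hreal : 𝒯.Realizes (storagePole τ) n (𝒯.extend 2 (scons (var 0) fun _ => θ)) :=
    IterTable.realizes_extend le_rfl rfl
      (app_app_mem_realizers hE mem_storagePole_of_mach hθn) fun m hm hm' => by lia
  have hmem := hstore _ hreal
  simp only [substL, hT.freeLBelow.substL_eq_self, hreal.zero, 𝒯.extend_of_lt one_lt_two, scons]
    at hmem
  obtain ⟨σ, hσ, hmach⟩ := hmem
  exact ⟨σ, hσ, hmach.simMu_mu
    (muClosed_app.2 ⟨muClosed_app.2 ⟨hT.muFree.muClosed, hθ.2⟩, fun _ => id⟩)⟩
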